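/- Let n ≥ 2, −∞ < μ < 1/4 and 1 < p < p_c := 1 + 2/(n−2+α₊). Then there exists a positive classical solution u of Δu + (μ/x₁²)u = u^p on ℝⁿ₊ which is axially symmetric, homogeneous of degree −2/(p−1), and satisfies, for some c > 0, c⁻¹ x₁^{α₊} |x|^{−α₊−2/(p−1)} ≤ u(x) ≤ c x₁^{α₊} |x|^{−α₊−2/(p−1)} for all x ∈ ℝⁿ₊; moreover u is unique: any two positive, axially symmetric solutions homogeneous of degree −2/(p−1) each satisfying such a two-sided bound (with possibly different constants c) are equal. -/

import Mathlib

open Real Set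

noncomputable def lap {n : ℕ} (u : EuclideanSpace ℝ (Fin n) → ℝ)
    (x : EuclideanSpace ℝ (Fin n)) : ℝ :=
  ∑ i : Fin n, iteratedFDeriv ℝ 2 u x ![EuclideanSpace.single i 1, EuclideanSpace.single i 1]

noncomputable def x1 {n : ℕ} (x : EuclideanSpace ℝ (Fin n)) : ℝ :=
  if h : 0 < n then x ⟨0, h⟩ else 0

def halfSpace (n : ℕ) : Set (EuclideanSpace ℝ (Fin n)) := {x | 0 < x1 x}

noncomputable def aPlus (μ : ℝ) : ℝ := 1 / 2 + Real.sqrt (1 / 4 - μ)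

noncomputable def aMinus (μ : ℝ) : ℝ := 1 / 2 - Real.sqrt (1 / 4 - μ)

noncomputable def Lam (n : ℕ) (s : ℝ) : ℝ := s * (s + n - 2)

/-- A positive, axially symmetric, `(−2/(p−1))`-homogeneous classical solution of
`Δu + (μ/x₁²)u = u^p` on the half-space with two-sided bound
`c⁻¹ x₁^{α₊} |x|^{−α₊−2/(p−1)} ≤ u ≤ c x₁^{α₊} |x|^{−α₊−2/(p−1)}`. -/
def IsSepSolPlus (n : ℕ) (μ p : ℝ) (u : EuclideanSpace ℝ (Fin n) → ℝ) : Prop :=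
  ContDiffOn ℝ 2 u (halfSpace n) ∧
  (∀ x ∈ halfSpace n, 0 < u x) ∧
  (∀ x ∈ halfSpace n, lap u x + (μ / (x1 x) ^ 2) * u x = u x ^ p) ∧
  (∀ x ∈ halfSpace n, ∀ y ∈ halfSpace n, x1 x = x1 y → ‖x‖ = ‖y‖ → u x = u y) ∧
  (∀ l : ℝ, 0 < l → ∀ x ∈ halfSpace n, u (l • x) = l ^ (-(2 / (p - 1))) * u x) ∧
  (∃ c > (0 : ℝ), ∀ x ∈ halfSpace n,
    c⁻¹ * x1 x ^ aPlus μ * ‖x‖ ^ (-(aPlus μ) - 2 / (p - 1)) ≤ u x ∧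
    u x ≤ c * x1 x ^ aPlus μ * ‖x‖ ^ (-(aPlus μ) - 2 / (p - 1)))

/-! Homogeneity and axial symmetry reduce `u` to `x₁ ^ (-s) * W (|x|² / x₁² - 1)` with
`s = 2 / (p - 1)`, and the equation to an ordinary differential equation for `W` on `(0, ∞)` which
is singular at `0`; the two-sided bound says that `W` is comparable to `(1 + z) ^ (-(s + α₊) / 2)`.

Uniqueness: for two profiles `W` and `V` the weighted Wronskian is the flux of `ρ = W / V`; it
vanishes at `0` and increases where `ρ > 1`. If `ρ` exceeded `1` somewhere, it would grow at least
like `log (1 + z)`, although both profiles decay at the same rate.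

Existence: for `p < p_c` a small multiple of `(1 + z) ^ (-(s + α₊) / 2)` is a subsolution, and a
large multiple with a lower order correction is a supersolution. A substitution `W = Ψ * v` turns
the equation into the system `v' = -e * P`, `N * P + z * P' = F z v` with `F` increasing in `v`
between `0` and the supersolution; solving it for `P` and then for `v` gives a monotone operator on
`[0, ∞]`-valued functions, whose fixed point is a solution. -/

open Filter Topology MeasureTheory

/-- Second-order differentiability of a function of one real variable: `f'` is the derivative of
`f` near `t`, and `f''` is the derivative of `f'` at `t`. -/
def HasDerivAt₂ (f f' : ℝ → ℝ) (f'' t : ℝ) : Prop :=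
  (∀ᶠ h in 𝓝 t, HasDerivAt f (f' h) h) ∧ HasDerivAt f' f'' t

namespace HasDerivAt₂

variable {f f' g g' φ φ' W W' : ℝ → ℝ} {f'' g'' φ'' W'' t : ℝ}

lemma hasDerivAt (hf : HasDerivAt₂ f f' f'' t) : HasDerivAt f (f' t) t := hf.1.self_of_nhds

lemma deriv_eventuallyEq (hf : HasDerivAt₂ f f' f'' t) : deriv f =ᶠ[𝓝 t] f' :=
  hf.1.mono fun _ h => h.deriv

lemma deriv_deriv (hf : HasDerivAt₂ f f' f'' t) : deriv (deriv f) t = f'' :=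
  hf.deriv_eventuallyEq.deriv_eq.trans hf.2.deriv

lemma congr_right {f₂ : ℝ} (hf : HasDerivAt₂ f f' f'' t) (h : f'' = f₂) : HasDerivAt₂ f f' f₂ t :=
  h ▸ hf

lemma mul (hf : HasDerivAt₂ f f' f'' t) (hg : HasDerivAt₂ g g' g'' t) :
    HasDerivAt₂ (fun h => f h * g h) (fun h => f' h * g h + f h * g' h)
      (f'' * g t + 2 * (f' t * g' t) + f t * g'') t := by
  refine ⟨?_, ?_⟩
  · filter_upwards [hf.1, hg.1] with h hfh hgh using hfh.mul hgh
  · exact ((hf.2.mul hg.hasDerivAt).add (hf.hasDerivAt.mul hg.2)).congr_deriv (by ring)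

lemma const_mul (c : ℝ) (hf : HasDerivAt₂ f f' f'' t) :
    HasDerivAt₂ (fun h => c * f h) (fun h => c * f' h) (c * f'') t :=
  ⟨hf.1.mono fun _ h => h.const_mul c, hf.2.const_mul c⟩

lemma sub (hf : HasDerivAt₂ f f' f'' t) (hg : HasDerivAt₂ g g' g'' t) :
    HasDerivAt₂ (fun h => f h - g h) (fun h => f' h - g' h) (f'' - g'') t :=
  ⟨(hf.1.and hg.1).mono fun _ h => h.1.sub h.2, hf.2.sub hg.2⟩

lemma comp (hW : HasDerivAt₂ W W' W'' (φ t)) (hφ : HasDerivAt₂ φ φ' φ'' t) :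
    HasDerivAt₂ (fun h => W (φ h)) (fun h => W' (φ h) * φ' h)
      (W'' * φ' t ^ 2 + W' (φ t) * φ'') t := by
  refine ⟨?_, ?_⟩
  · filter_upwards [hφ.hasDerivAt.continuousAt.tendsto.eventually hW.1, hφ.1] with h hWh hφh
      using hWh.comp h hφh
  · exact ((hW.2.comp t hφ.hasDerivAt).mul hφ.2).congr_deriv (by rw [Function.comp_apply]; ring)

end HasDerivAt₂

lemma hasDerivAt₂_of_contDiffAt {W : ℝ → ℝ} {t : ℝ} (hW : ContDiffAt ℝ 2 W t) :
    HasDerivAt₂ W (deriv W) (deriv (deriv W) t) t := by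
  refine ⟨?_, ?_⟩
  · filter_upwards [hW.eventually (by simp)] with y hy
      using (hy.differentiableAt two_ne_zero).hasDerivAt
  · exact ((hW.derivWithin (m := 1) one_add_one_eq_two.le).differentiableAt one_ne_zero).hasDerivAt

lemma hasDerivAt₂_add_rpow (a : ℝ) {c t : ℝ} (h : c + t ≠ 0) :
    HasDerivAt₂ (fun h => (c + h) ^ a) (fun h => a * (c + h) ^ (a - 1))
      (a * ((a - 1) * (c + t) ^ (a - 2))) t := by
  have first (b : ℝ) {y : ℝ} (hy : c + y ≠ 0) :
      HasDerivAt (fun h => (c + h) ^ b) (b * (c + y) ^ (b - 1)) y := by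
    simpa using ((hasDerivAt_id y).const_add c).rpow_const (p := b) (Or.inl hy)
  have hcont : Continuous fun y : ℝ => c + y := by fun_prop
  refine ⟨?_, ?_⟩
  · filter_upwards [hcont.continuousAt.eventually_ne h] with y hy using first a hy
  · simpa [show a - 1 - 1 = a - 2 by ring] using (first (a - 1) h).const_mul a

lemma iteratedFDeriv_two_diag_eq {E : Type*} [NormedAddCommGroup E] [NormedSpace ℝ E] {u : E → ℝ}
    {x v : E} {f' : ℝ → ℝ} {f'' : ℝ} (hu : ContDiffAt ℝ 2 u x)
    (hf : HasDerivAt₂ (fun h : ℝ => u (x + h • v)) f' f'' 0) :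
    iteratedFDeriv ℝ 2 u x ![v, v] = f'' := by
  have hline (h : ℝ) : HasDerivAt (fun h : ℝ => x + h • v) v h := by
    simpa using ((hasDerivAt_id h).smul_const v).const_add x
  have hcont : Tendsto (fun h : ℝ => x + h • v) (𝓝 0) (𝓝 x) := by
    simpa using (hline 0).continuousAt.tendsto
  have hfirst : f' =ᶠ[𝓝 0] fun h => fderiv ℝ u (x + h • v) v := by
    filter_upwards [hf.1, hcont.eventually (hu.eventually (by simp))] with h hfh huh
    exact hfh.unique ((huh.differentiableAt two_ne_zero).hasFDerivAt.comp_hasDerivAt h (hline h))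
  have hfderiv : HasFDerivAt (fderiv ℝ u) (fderiv ℝ (fderiv ℝ u) x) (x + (0 : ℝ) • v) := by
    rw [zero_smul, add_zero]
    exact ((hu.fderiv_right (m := 1) one_add_one_eq_two.le).differentiableAt
      one_ne_zero).hasFDerivAt
  have hsecond : HasDerivAt (fun h : ℝ => fderiv ℝ u (x + h • v) v)
      (fderiv ℝ (fderiv ℝ u) x v v) 0 :=
    (ContinuousLinearMap.apply ℝ ℝ v).hasFDerivAt.comp_hasDerivAt (0 : ℝ)
      (hfderiv.comp_hasDerivAt (0 : ℝ) (hline 0))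
  rw [iteratedFDeriv_two_apply]
  exact (hsecond.congr_of_eventuallyEq hfirst).unique hf.2

section Geometry

variable {n : ℕ} {x : EuclideanSpace ℝ (Fin n)}

/-- The squared tangent of the angle between `x` and the `x₁`-axis: the invariant of `x` under
dilations and axial symmetry. -/
noncomputable def tanSq (x : EuclideanSpace ℝ (Fin n)) : ℝ := ‖x‖ ^ 2 / x1 x ^ 2 - 1

lemma x1_eq_apply (hn : 0 < n) (x : EuclideanSpace ℝ (Fin n)) : x1 x = x ⟨0, hn⟩ := by
  simp [x1, hn]

lemma contDiff_x1 {m : WithTop ℕ∞} : ContDiff ℝ m (x1 : EuclideanSpace ℝ (Fin n) → ℝ) := by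
  unfold x1
  split_ifs <;> fun_prop

lemma isOpen_halfSpace (n : ℕ) : IsOpen (halfSpace n) :=
  isOpen_lt continuous_const (contDiff_x1 (m := 0)).continuous

lemma pos_of_mem_halfSpace (hx : x ∈ halfSpace n) : 0 < n := by
  by_contra hn
  simp [halfSpace, x1, hn] at hx

lemma x1_le_norm (x : EuclideanSpace ℝ (Fin n)) : x1 x ≤ ‖x‖ := by
  unfold x1
  split_ifs
  · exact (le_abs_self _).trans (PiLp.norm_apply_le x _)
  · exact norm_nonneg x

lemma tanSq_nonneg (hx : x ∈ halfSpace n) : 0 ≤ tanSq x := by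
  have hx0 : 0 < x1 x := hx
  rw [tanSq, sub_nonneg, one_le_div (by positivity)]
  gcongr
  exact x1_le_norm x

lemma norm_sq_eq_x1_sq_mul (hx : x ∈ halfSpace n) : ‖x‖ ^ 2 = x1 x ^ 2 * (1 + tanSq x) := by
  have hx0 : x1 x ≠ 0 := ne_of_gt hx
  rw [tanSq]
  field_simp
  ring

lemma contDiffAt_tanSq (hx : x ∈ halfSpace n) {m : WithTop ℕ∞} : ContDiffAt ℝ m tanSq x :=
  ((contDiff_norm_sq ℝ).contDiffAt.div (contDiff_x1.pow 2).contDiffAt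
    (pow_ne_zero _ (ne_of_gt hx))).sub contDiffAt_const

lemma norm_add_smul_single_sq (x : EuclideanSpace ℝ (Fin n)) (i : Fin n) (h : ℝ) :
    ‖x + h • EuclideanSpace.single i (1 : ℝ)‖ ^ 2 = ‖x‖ ^ 2 + 2 * h * x i + h ^ 2 := by
  rw [norm_add_sq_real]
  simp only [inner_smul_right, norm_smul, EuclideanSpace.inner_single_right, norm_eq_abs,
    PiLp.norm_single, conj_trivial, norm_one, mul_one, one_mul, sq_abs]
  ring

/-- The function of homogeneity `-s` with angular profile `W`. -/
noncomputable def sepFun (s : ℝ) (W : ℝ → ℝ) (x : EuclideanSpace ℝ (Fin n)) : ℝ :=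
  x1 x ^ (-s) * W (tanSq x)

variable {W : ℝ → ℝ}

lemma contDiffAt_sepFun (hx : x ∈ halfSpace n) (s : ℝ) (hW : ContDiffAt ℝ 2 W (tanSq x)) :
    ContDiffAt ℝ 2 (sepFun s W) x :=
  (contDiff_x1.contDiffAt.rpow_const_of_ne (ne_of_gt hx)).mul
    (hW.comp x (contDiffAt_tanSq hx))

lemma iteratedFDeriv_two_sepFun_tangential (hx : x ∈ halfSpace n) (s : ℝ) {i : Fin n}
    (hi : i.val ≠ 0) (hW : ContDiffAt ℝ 2 W (tanSq x)) :
    iteratedFDeriv ℝ 2 (sepFun s W) x ![EuclideanSpace.single i 1, EuclideanSpace.single i 1]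
      = x1 x ^ (-s - 2) * (4 * x i ^ 2 / x1 x ^ 2 * deriv (deriv W) (tanSq x)
          + 2 * deriv W (tanSq x)) := by
  have hx0 : x1 x ≠ 0 := ne_of_gt hx
  have hn := pos_of_mem_halfSpace hx
  set φ : ℝ → ℝ := fun h => tanSq x + (2 * h * x i + h ^ 2) / x1 x ^ 2 with hφ_def
  have hφ : HasDerivAt₂ φ (fun h => (2 * x i + 2 * h) / x1 x ^ 2) (2 / x1 x ^ 2) 0 := by
    have first (h : ℝ) : HasDerivAt φ ((2 * x i + 2 * h) / x1 x ^ 2) h := by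
      have := (((((hasDerivAt_id h).const_mul 2).mul_const (x i)).add
        ((hasDerivAt_id h).pow 2)).div_const (x1 x ^ 2)).const_add (tanSq x)
      exact this.congr_deriv (by simp)
    refine ⟨.of_forall first, ?_⟩
    simpa using (((hasDerivAt_id (0 : ℝ)).const_mul 2).const_add (2 * x i)).div_const (x1 x ^ 2)
  have hφ0 : φ 0 = tanSq x := by simp [hφ_def]
  have hline : (fun h : ℝ => sepFun s W (x + h • EuclideanSpace.single i 1))
      = fun h => x1 x ^ (-s) * W (φ h) := by
    have hx1 (h : ℝ) : x1 (x + h • EuclideanSpace.single i (1 : ℝ)) = x1 x := by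
      have : (⟨0, hn⟩ : Fin n) ≠ i := fun h => hi (h ▸ rfl)
      simp [x1_eq_apply hn, this]
    funext h
    rw [sepFun, tanSq, hx1, norm_add_smul_single_sq]
    congr 2
    rw [hφ_def, tanSq]
    ring
  have hW₂ := hasDerivAt₂_of_contDiffAt hW
  rw [← hφ0] at hW₂
  have hderiv := (hW₂.comp hφ).const_mul (x1 x ^ (-s))
  rw [← hline] at hderiv
  refine iteratedFDeriv_two_diag_eq (contDiffAt_sepFun hx s hW) (hderiv.congr_right ?_)
  rw [hφ0, rpow_sub hx, rpow_two]
  field_simp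
  ring

lemma iteratedFDeriv_two_sepFun_normal (hx : x ∈ halfSpace n) (s : ℝ) {i : Fin n}
    (hi : i.val = 0) (hW : ContDiffAt ℝ 2 W (tanSq x)) :
    iteratedFDeriv ℝ 2 (sepFun s W) x ![EuclideanSpace.single i 1, EuclideanSpace.single i 1]
      = x1 x ^ (-s - 2) * (4 * tanSq x ^ 2 * deriv (deriv W) (tanSq x)
          + (6 + 4 * s) * tanSq x * deriv W (tanSq x)
          + s * (s + 1) * W (tanSq x)) := by
  have hx0 : 0 < x1 x := hx
  have hxi : x i = x1 x := by rw [x1_eq_apply i.pos, show i = ⟨0, i.pos⟩ from Fin.ext hi]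
  have hx1 (h : ℝ) : x1 (x + h • EuclideanSpace.single i (1 : ℝ)) = x1 x + h := by
    have : (⟨0, i.pos⟩ : Fin n) = i := Fin.ext hi.symm
    simp [x1_eq_apply i.pos, this]
  have hpow (a : ℝ) := hasDerivAt₂_add_rpow a (c := x1 x) (t := 0) (by simpa using hx0.ne')
  have hφ := (hpow (-2)).const_mul (tanSq x * x1 x ^ 2)
  set φ : ℝ → ℝ := fun h => tanSq x * x1 x ^ 2 * (x1 x + h) ^ (-2 : ℝ) with hφ_def
  have hφ0 : φ 0 = tanSq x := by
    simp only [hφ_def, add_zero, rpow_neg hx0.le, rpow_two]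
    field_simp
  have hline : (fun h : ℝ => sepFun s W (x + h • EuclideanSpace.single i 1))
      =ᶠ[𝓝 0] fun h => (x1 x + h) ^ (-s) * W (φ h) := by
    filter_upwards [Ioi_mem_nhds (neg_lt_zero.2 hx0)] with h hh
    have hpos : 0 < x1 x + h := by linarith [mem_Ioi.1 hh]
    rw [sepFun, tanSq, hx1, norm_add_smul_single_sq, hxi, norm_sq_eq_x1_sq_mul hx]
    simp only [hφ_def, rpow_neg hpos.le, rpow_two]
    congr 2
    field_simp
    ring
  have hW₂ := hasDerivAt₂_of_contDiffAt hW
  rw [← hφ0] at hW₂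
  have hderiv := (hpow (-s)).mul (hW₂.comp hφ)
  refine iteratedFDeriv_two_diag_eq (contDiffAt_sepFun hx s hW)
    (HasDerivAt₂.congr_right ⟨?_, hderiv.2⟩ ?_)
  · filter_upwards [hline.eventuallyEq_nhds, hderiv.1] with h hu hd
      using hd.congr_of_eventuallyEq hu
  · rw [hφ0]
    simp only [add_zero, rpow_sub hx0, rpow_neg hx0.le, rpow_two, rpow_one]
    field_simp
    ring

/-- The operator on angular profiles corresponding to `Δ + μ / x₁²` on functions of homogeneity
`-s`, written in the variable `tanSq`; the dimension enters through `N = (n - 1) / 2`. -/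
noncomputable def profileOp (N s μ : ℝ) (W : ℝ → ℝ) (z : ℝ) : ℝ :=
  4 * z * (1 + z) * deriv (deriv W) z + (4 * N + (6 + 4 * s) * z) * deriv W z
    + (s * (s + 1) + μ) * W z

theorem lap_sepFun_add (hx : x ∈ halfSpace n) (s μ : ℝ) (hW : ContDiffAt ℝ 2 W (tanSq x)) :
    lap (sepFun s W) x + μ / x1 x ^ 2 * sepFun s W x
      = x1 x ^ (-s - 2) * profileOp ((n - 1) / 2) s μ W (tanSq x) := by
  have hx0 : 0 < x1 x := hx
  have hn := pos_of_mem_halfSpace hx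
  let i₀ : Fin n := ⟨0, hn⟩
  have hsum : ∑ i ∈ Finset.univ.erase i₀, x i ^ 2 = tanSq x * x1 x ^ 2 := by
    have : ‖x‖ ^ 2 = x1 x ^ 2 + ∑ i ∈ Finset.univ.erase i₀, x i ^ 2 := by
      rw [EuclideanSpace.real_norm_sq_eq, ← Finset.add_sum_erase _ _ (Finset.mem_univ i₀),
        x1_eq_apply hn]
    linarith [norm_sq_eq_x1_sq_mul hx]
  rw [lap, ← Finset.add_sum_erase _ _ (Finset.mem_univ i₀),
    iteratedFDeriv_two_sepFun_normal hx s rfl hW,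
    Finset.sum_congr rfl fun i hi => iteratedFDeriv_two_sepFun_tangential hx s
      (fun h => Finset.ne_of_mem_erase hi (Fin.ext h)) hW,
    ← Finset.mul_sum, Finset.sum_add_distrib, ← Finset.sum_mul, ← Finset.sum_div,
    ← Finset.mul_sum, hsum, sepFun, profileOp, rpow_sub hx, rpow_two]
  simp only [Finset.sum_const, Finset.card_erase_of_mem (Finset.mem_univ i₀), Finset.card_univ,
    Fintype.card_fin, nsmul_eq_mul, Nat.cast_pred hn]
  field_simp
  ring

end Geometry

lemma hasDerivAt_posPart_sq (x : ℝ) : HasDerivAt (fun y : ℝ => max y 0 ^ 2) (2 * max x 0) x := by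
  have hbound (y : ℝ) : |max y 0 ^ 2 - max x 0 ^ 2 - 2 * max x 0 * (y - x)| ≤ (y - x) ^ 2 := by
    rw [abs_le]
    rcases max_cases x 0 with ⟨hx, _⟩ | ⟨hx, _⟩ <;> rcases max_cases y 0 with ⟨hy, _⟩ | ⟨hy, _⟩ <;>
      rw [hx, hy] <;> constructor <;> nlinarith
  have hremainder : HasDerivAt (fun y => max y 0 ^ 2 - max x 0 ^ 2 - 2 * max x 0 * (y - x)) 0 x :=
    ((Asymptotics.isBigO_of_le _ fun y => by simpa using hbound y).hasFDerivAt (𝕜 := ℝ)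
      one_lt_two).hasDerivAt
  have hlinear : HasDerivAt (fun y => max x 0 ^ 2 + 2 * max x 0 * (y - x)) (2 * max x 0) x := by
    simpa using (((hasDerivAt_id x).sub_const x).const_mul (2 * max x 0)).const_add (max x 0 ^ 2)
  refine ((hremainder.add hlinear).congr_deriv (zero_add _)).congr_of_eventuallyEq
    (.of_forall fun y => ?_)
  simp only [Pi.add_apply]
  ring

section Flux

variable {ρ a R g : ℝ → ℝ}

lemma hasDerivAt_flux_mul_posPart_sq {z : ℝ} (hρ : HasDerivAt ρ (a z * R z) z)
    (hR : HasDerivAt R (g z) z) :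
    HasDerivAt (fun y => R y * max (ρ y - 1) 0 ^ 2)
      (g z * max (ρ z - 1) 0 ^ 2 + 2 * a z * R z ^ 2 * max (ρ z - 1) 0) z := by
  have hpos := (hasDerivAt_posPart_sq (ρ z - 1)).comp z (hρ.sub_const 1)
  exact (hR.mul hpos).congr_deriv (by simp only [Function.comp_apply]; ring)

lemma flux_mul_posPart_sq_monotoneOn (hρ : ∀ z > 0, HasDerivAt ρ (a z * R z) z)
    (hR : ∀ z > 0, HasDerivAt R (g z) z) (ha : ∀ z > 0, 0 < a z)
    (hg : ∀ z > 0, 1 < ρ z → 0 < g z) :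
    MonotoneOn (fun y => R y * max (ρ y - 1) 0 ^ 2) (Ioi 0) := by
  have hderiv (z : ℝ) (hz : 0 < z) := hasDerivAt_flux_mul_posPart_sq (hρ z hz) (hR z hz)
  refine monotoneOn_of_hasDerivWithinAt_nonneg (convex_Ioi 0)
    (fun z hz => (hderiv z hz).continuousAt.continuousWithinAt)
    (fun z hz => (hderiv z (interior_subset hz)).hasDerivWithinAt) fun z hz => ?_
  have hz : 0 < z := interior_subset hz
  have := ha z hz
  rcases le_or_gt (ρ z) 1 with h | h
  · rw [max_eq_right (by linarith)]
    simp
  · have := hg z hz h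
    positivity

lemma flux_mul_posPart_sq_nonneg (hρ : ∀ z > 0, HasDerivAt ρ (a z * R z) z)
    (hR : ∀ z > 0, HasDerivAt R (g z) z) (ha : ∀ z > 0, 0 < a z)
    (hg : ∀ z > 0, 1 < ρ z → 0 < g z) (hR0 : Tendsto R (𝓝[>] 0) (𝓝 0)) {C : ℝ}
    (hC : ∀ z > 0, ρ z ≤ C) {z : ℝ} (hz : 0 < z) : 0 ≤ R z * max (ρ z - 1) 0 ^ 2 := by
  have hmono := flux_mul_posPart_sq_monotoneOn hρ hR ha hg
  have hbdd : IsBoundedUnder (· ≤ ·) (𝓝[>] 0) (norm ∘ fun y => max (ρ y - 1) 0 ^ 2) := by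
    refine isBoundedUnder_of_eventually_le (a := max (C - 1) 0 ^ 2) ?_
    filter_upwards [self_mem_nhdsWithin] with y hy
    have := hC y hy
    rw [Function.comp_apply, norm_of_nonneg (sq_nonneg _)]
    gcongr
  refine le_of_tendsto (hR0.zero_mul_isBoundedUnder_le hbdd) ?_
  filter_upwards [Ioc_mem_nhdsGT hz] with y hy using hmono hy.1 hz hy.2

lemma flux_mul_posPart_sq_pos (hρ : ∀ z > 0, HasDerivAt ρ (a z * R z) z)
    (hR : ∀ z > 0, HasDerivAt R (g z) z) (ha : ∀ z > 0, 0 < a z)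
    (hg : ∀ z > 0, 1 < ρ z → 0 < g z) (hR0 : Tendsto R (𝓝[>] 0) (𝓝 0)) {C : ℝ}
    (hC : ∀ z > 0, ρ z ≤ C) {z : ℝ} (hz : 0 < z) (hρz : 1 < ρ z) :
    0 < R z * max (ρ z - 1) 0 ^ 2 := by
  have hnonneg {y : ℝ} (hy : 0 < y) := flux_mul_posPart_sq_nonneg hρ hR ha hg hR0 hC hy
  refine (hnonneg hz).lt_of_ne fun hB => ?_
  have hmin : IsLocalMin (fun y => R y * max (ρ y - 1) 0 ^ 2) z := by
    filter_upwards [Ioi_mem_nhds hz] with y hy using hB ▸ hnonneg hy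
  have hzero := hmin.hasDerivAt_eq_zero (hasDerivAt_flux_mul_posPart_sq (hρ z hz) (hR z hz))
  have := hg z hz hρz
  have := ha z hz
  have : 0 < max (ρ z - 1) 0 := lt_max_of_lt_left (by linarith)
  exact absurd hzero (by positivity)

lemma tendsto_atTop_of_div_one_add_le_deriv {f f' : ℝ → ℝ} {a e : ℝ} (ha : -1 < a) (he : 0 < e)
    (hf : ∀ z ≥ a, HasDerivAt f (f' z) z) (hf' : ∀ z ≥ a, e / (1 + z) ≤ f' z) :
    Tendsto f atTop atTop := by
  have hlog (z : ℝ) (hz : a ≤ z) : HasDerivAt (fun y => e * log (1 + y)) (e / (1 + z)) z := by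
    have := (((hasDerivAt_id z).const_add 1).log (by simp only [id]; linarith)).const_mul e
    simpa [div_eq_mul_inv] using this
  have hderiv (z : ℝ) (hz : a ≤ z) := (hf z hz).sub (hlog z hz)
  have hmono : MonotoneOn (f - fun y => e * log (1 + y)) (Ici a) :=
    monotoneOn_of_hasDerivWithinAt_nonneg (convex_Ici a)
      (fun z hz => (hderiv z hz).continuousAt.continuousWithinAt)
      (fun z hz => (hderiv z (interior_subset hz)).hasDerivWithinAt)
      fun z hz => sub_nonneg.2 (hf' z (interior_subset hz))
  have hlim : Tendsto (fun z => e * log (1 + z) + (f a - e * log (1 + a))) atTop atTop :=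
    tendsto_atTop_add_const_right _ _
      ((tendsto_log_atTop.comp (tendsto_atTop_add_const_left _ 1 tendsto_id)).const_mul_atTop he)
  refine tendsto_atTop_mono' _ ?_ hlim
  filter_upwards [eventually_ge_atTop a] with z hz
  linarith [show f a - e * log (1 + a) ≤ f z - e * log (1 + z) from hmono self_mem_Ici hz hz]

/-- Once the flux times `(ρ - 1)₊²` is positive it stays so, which forces `ρ` to grow at least like
a multiple of `log (1 + z)`. -/
theorem le_one_of_flux {c C : ℝ} (hc : 0 < c) (hρ : ∀ z > 0, HasDerivAt ρ (a z * R z) z)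
    (hR : ∀ z > 0, HasDerivAt R (g z) z) (ha : ∀ z > 0, c / (1 + z) ≤ a z)
    (hg : ∀ z > 0, 1 < ρ z → 0 < g z) (hR0 : Tendsto R (𝓝[>] 0) (𝓝 0))
    (hC : ∀ z > 0, ρ z ≤ C) {z : ℝ} (hz : 0 < z) : ρ z ≤ 1 := by
  by_contra! hρz
  have ha0 (y : ℝ) (hy : 0 < y) : 0 < a y := (by positivity : 0 < c / (1 + y)).trans_le (ha y hy)
  set B : ℝ → ℝ := fun y => R y * max (ρ y - 1) 0 ^ 2 with hB_def
  have hmono : MonotoneOn B (Ioi 0) := flux_mul_posPart_sq_monotoneOn hρ hR ha0 hg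
  have hBz : 0 < B z := flux_mul_posPart_sq_pos hρ hR ha0 hg hR0 hC hz hρz
  have hR_lower (y : ℝ) (hy : z ≤ y) : B z / max (C - 1) 0 ^ 2 ≤ R y := by
    have hBy : B z ≤ B y := hmono hz (hz.trans_le hy) hy
    have hρC := hC y (hz.trans_le hy)
    have hpos : 0 < max (ρ y - 1) 0 :=
      (le_max_right _ _).lt_of_ne' fun h => by simp [hB_def, h] at hBy hBz; linarith
    have hRy : 0 < R y := pos_of_mul_pos_left (hBz.trans_le hBy) (sq_nonneg _)
    have hle : max (ρ y - 1) 0 ≤ max (C - 1) 0 := by gcongr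
    rw [div_le_iff₀ (pow_pos (hpos.trans_le hle) 2)]
    exact hBy.trans (mul_le_mul_of_nonneg_left (pow_le_pow_left₀ hpos.le hle 2) hRy.le)
  have hgrowth : Tendsto ρ atTop atTop := by
    refine tendsto_atTop_of_div_one_add_le_deriv (a := z)
      (e := c * (B z / max (C - 1) 0 ^ 2)) (by linarith) (mul_pos hc (div_pos hBz ?_))
      (fun y hy => hρ y (hz.trans_le hy)) fun y hy => ?_
    · have := hC z hz
      exact pow_pos (lt_max_of_lt_left (by linarith)) 2
    · have hy0 := hz.trans_le hy
      rw [mul_div_right_comm]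
      exact mul_le_mul (ha y hy0) (hR_lower y hy) (by positivity) (ha0 y hy0).le
  obtain ⟨y, hyC, hy⟩ := ((hgrowth.eventually_gt_atTop C).and (eventually_gt_atTop 0)).exists
  exact (hC y hy).not_gt hyC

end Flux

/-- Angular profiles of the solutions of homogeneity `-s`: positive solutions of the profile
equation comparable to `(1 + z) ^ (-k)`. The last condition says that `h ↦ W (h ^ 2)` has vanishing
derivative at `0`, which is what is left of smoothness across the `x₁`-axis. -/
structure IsProfile (N s μ p k : ℝ) (W : ℝ → ℝ) : Prop where
  contDiffAt {z : ℝ} (hz : 0 < z) : ContDiffAt ℝ 2 W z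
  pos {z : ℝ} (hz : 0 < z) : 0 < W z
  profileOp_eq {z : ℝ} (hz : 0 < z) : profileOp N s μ W z = W z ^ p
  exists_bound : ∃ c > 0, ∀ z > 0, c⁻¹ * (1 + z) ^ (-k) ≤ W z ∧ W z ≤ c * (1 + z) ^ (-k)
  tendsto_sqrt_mul_deriv : Tendsto (fun z => √z * deriv W z) (𝓝[>] 0) (𝓝 0)

/-- The weight for which `profileOp` is formally self-adjoint. -/
noncomputable def profileWeight (N s z : ℝ) : ℝ := z ^ N * (1 + z) ^ (s + 3 / 2 - N)

/-- The weighted Wronskian of two profiles. -/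
noncomputable def profileFlux (N s : ℝ) (W V : ℝ → ℝ) (z : ℝ) : ℝ :=
  profileWeight N s z * (deriv W z * V z - W z * deriv V z)

lemma profileWeight_pos (N s : ℝ) {z : ℝ} (hz : 0 < z) : 0 < profileWeight N s z := by
  unfold profileWeight
  positivity

lemma hasDerivAt_profileWeight (N s : ℝ) {z : ℝ} (hz : 0 < z) :
    HasDerivAt (profileWeight N s)
      (profileWeight N s z * (4 * N + (6 + 4 * s) * z) / (4 * z * (1 + z))) z := by
  have h1z : 0 < 1 + z := by linarith
  have hmul := (hasDerivAt_rpow_const (p := N) (Or.inl hz.ne')).mul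
    (hasDerivAt₂_add_rpow (s + 3 / 2 - N) h1z.ne').hasDerivAt
  refine hmul.congr_deriv ?_
  rw [profileWeight, rpow_sub_one hz.ne', rpow_sub_one h1z.ne']
  field_simp
  ring

section Uniqueness

variable {N s μ p k : ℝ} {W V : ℝ → ℝ}

lemma hasDerivAt_div_profileFlux (N s : ℝ) {z : ℝ} (hz : 0 < z) (hW : ContDiffAt ℝ 2 W z)
    (hV : ContDiffAt ℝ 2 V z) (hV0 : V z ≠ 0) :
    HasDerivAt (W / V) ((profileWeight N s z * V z ^ 2)⁻¹ * profileFlux N s W V z) z := by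
  refine ((hasDerivAt₂_of_contDiffAt hW).hasDerivAt.div
    (hasDerivAt₂_of_contDiffAt hV).hasDerivAt hV0).congr_deriv ?_
  have := (profileWeight_pos N s hz).ne'
  rw [profileFlux]
  field_simp

lemma hasDerivAt_profileFlux (hW : IsProfile N s μ p k W) (hV : IsProfile N s μ p k V) {z : ℝ}
    (hz : 0 < z) :
    HasDerivAt (profileFlux N s W V)
      (profileWeight N s z * (W z ^ p * V z - W z * V z ^ p) / (4 * z * (1 + z))) z := by
  have hW₂ := hasDerivAt₂_of_contDiffAt (hW.contDiffAt hz)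
  have hV₂ := hasDerivAt₂_of_contDiffAt (hV.contDiffAt hz)
  have hderiv := (hasDerivAt_profileWeight N s hz).mul
    ((hW₂.2.mul hV₂.hasDerivAt).sub (hW₂.hasDerivAt.mul hV₂.2))
  refine hderiv.congr_deriv ?_
  rw [← hW.profileOp_eq hz, ← hV.profileOp_eq hz, profileOp, profileOp]
  simp only [Pi.sub_apply, Pi.mul_apply]
  field_simp
  ring

lemma tendsto_profileFlux (hN : 1 / 2 ≤ N) (hW : IsProfile N s μ p k W)
    (hV : IsProfile N s μ p k V) : Tendsto (profileFlux N s W V) (𝓝[>] 0) (𝓝 0) := by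
  have hbdd {U : ℝ → ℝ} (hU : IsProfile N s μ p k U) :
      IsBoundedUnder (· ≤ ·) (𝓝[>] 0) (norm ∘ U) := by
    obtain ⟨c, -, hc⟩ := hU.exists_bound
    have hcont : ContinuousAt (fun z : ℝ => c * (1 + z) ^ (-k)) 0 := by
      refine continuousAt_const.mul (ContinuousAt.rpow_const (by fun_prop) (Or.inl ?_))
      norm_num
    refine (hcont.tendsto.mono_left nhdsWithin_le_nhds).isBoundedUnder_le.mono_le ?_
    filter_upwards [self_mem_nhdsWithin] with z hz
    rw [Function.comp_apply, norm_of_nonneg (hU.pos hz).le]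
    exact (hc z hz).2
  have hweight : ContinuousAt (fun z : ℝ => z ^ (N - 1 / 2) * (1 + z) ^ (s + 3 / 2 - N)) 0 := by
    refine (ContinuousAt.rpow_const (by fun_prop) (Or.inr (by linarith))).mul
      (ContinuousAt.rpow_const (by fun_prop) (Or.inl ?_))
    norm_num
  have hlim := (hweight.tendsto.mono_left nhdsWithin_le_nhds).mul
    ((hW.tendsto_sqrt_mul_deriv.zero_mul_isBoundedUnder_le (hbdd hV)).sub
      (hV.tendsto_sqrt_mul_deriv.zero_mul_isBoundedUnder_le (hbdd hW)))
  rw [sub_zero, mul_zero] at hlim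
  refine hlim.congr' ?_
  filter_upwards [self_mem_nhdsWithin] with z hz
  rw [profileFlux, profileWeight, rpow_sub hz, ← sqrt_eq_rpow]
  have := sqrt_pos.2 hz
  field_simp

lemma IsProfile.exists_div_one_add_le (hN : 0 ≤ N) (hk : s + 1 / 2 ≤ 2 * k)
    (hV : IsProfile N s μ p k V) :
    ∃ c > 0, ∀ z > 0, c / (1 + z) ≤ (profileWeight N s z * V z ^ 2)⁻¹ := by
  obtain ⟨c, hc, hVc⟩ := hV.exists_bound
  refine ⟨(c ^ 2)⁻¹, by positivity, fun z hz => ?_⟩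
  have hV0 := hV.pos hz
  have hP := profileWeight_pos N s hz
  have hPle : profileWeight N s z ≤ (1 + z) ^ (s + 3 / 2) := calc
    profileWeight N s z ≤ (1 + z) ^ N * (1 + z) ^ (s + 3 / 2 - N) := by
      unfold profileWeight
      gcongr
      linarith
    _ = (1 + z) ^ (s + 3 / 2) := by rw [← rpow_add (by linarith)]; ring_nf
  rw [div_eq_mul_inv, ← mul_inv]
  refine inv_anti₀ (by positivity) ?_
  calc profileWeight N s z * V z ^ 2
      ≤ (1 + z) ^ (s + 3 / 2) * (c * (1 + z) ^ (-k)) ^ 2 := by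
        gcongr
        exact (hVc z hz).2
    _ = c ^ 2 * (1 + z) ^ (s + 3 / 2 - 2 * k) := by
        rw [mul_pow, ← rpow_mul_natCast (by linarith), mul_left_comm, ← rpow_add (by linarith)]
        push_cast
        ring_nf
    _ ≤ c ^ 2 * (1 + z) ^ (1 : ℝ) := by
        gcongr <;> linarith
    _ = c ^ 2 * (1 + z) := by rw [rpow_one]

lemma IsProfile.exists_div_le (hW : IsProfile N s μ p k W) (hV : IsProfile N s μ p k V) :
    ∃ C, ∀ z > 0, (W / V) z ≤ C := by
  obtain ⟨c, hc, hWc⟩ := hW.exists_bound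
  obtain ⟨d, hd, hVd⟩ := hV.exists_bound
  refine ⟨c * d, fun z hz => ?_⟩
  rw [Pi.div_apply, div_le_iff₀ (hV.pos hz), mul_assoc]
  refine (hWc z hz).2.trans (mul_le_mul_of_nonneg_left ?_ hc.le)
  rw [← inv_mul_le_iff₀ hd]
  exact (hVd z hz).1

theorem IsProfile.le (hN : 1 / 2 ≤ N) (hp : 1 < p) (hk : s + 1 / 2 ≤ 2 * k)
    (hW : IsProfile N s μ p k W) (hV : IsProfile N s μ p k V) {z : ℝ} (hz : 0 < z) :
    W z ≤ V z := by
  obtain ⟨c, hc, ha⟩ := hV.exists_div_one_add_le (by linarith) hk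
  obtain ⟨C, hC⟩ := hW.exists_div_le hV
  have hflux := le_one_of_flux hc
    (fun y hy => hasDerivAt_div_profileFlux N s hy (hW.contDiffAt hy) (hV.contDiffAt hy)
      (hV.pos hy).ne')
    (fun y hy => hasDerivAt_profileFlux hW hV hy) ha (fun y hy hVW => ?_)
    (tendsto_profileFlux hN hW hV) hC hz
  · rwa [Pi.div_apply, div_le_one (hV.pos hz)] at hflux
  · rw [Pi.div_apply, one_lt_div (hV.pos hy)] at hVW
    have hV0 := hV.pos hy
    have hpow : V y ^ (p - 1) < W y ^ (p - 1) := by gcongr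
    rw [rpow_sub_one hV0.ne', rpow_sub_one (hW.pos hy).ne',
      div_lt_div_iff₀ hV0 (hW.pos hy)] at hpow
    have := profileWeight_pos N s hy
    exact div_pos (mul_pos this (by linarith)) (by positivity)

theorem IsProfile.eq (hN : 1 / 2 ≤ N) (hp : 1 < p) (hk : s + 1 / 2 ≤ 2 * k)
    (hW : IsProfile N s μ p k W) (hV : IsProfile N s μ p k V) {z : ℝ} (hz : 0 < z) :
    W z = V z :=
  (hW.le hN hp hk hV hz).antisymm (hV.le hN hp hk hW hz)

end Uniqueness

/-- The solution of the Euler equation `N * P + z * P' = g` that stays bounded at `0`, that is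
`z ^ (-N) * ∫ t in 0..z, t ^ (N - 1) * g t`, after the substitution `t = z * τ ^ N⁻¹`. -/
noncomputable def eulerSol (N : ℝ) (g : ℝ → ℝ) (z : ℝ) : ℝ :=
  N⁻¹ * ∫ τ in (0 : ℝ)..1, g (z * τ ^ N⁻¹)

section EulerEquation

variable {N : ℝ} {f g g' P P' : ℝ → ℝ} {z : ℝ}

lemma eulerSol_congr (hfg : EqOn f g (Ici 0)) (hz : 0 ≤ z) : eulerSol N f z = eulerSol N g z := by
  rw [eulerSol, eulerSol]
  congr 1
  refine intervalIntegral.integral_congr fun τ hτ => hfg ?_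
  rw [uIcc_of_le zero_le_one] at hτ
  exact mul_nonneg hz (rpow_nonneg hτ.1 _)

lemma eulerSol_nonneg (hN : 0 < N) (hg : ∀ t ≥ 0, 0 ≤ g t) (hz : 0 ≤ z) : 0 ≤ eulerSol N g z :=
  mul_nonneg (inv_nonneg.2 hN.le) <| intervalIntegral.integral_nonneg zero_le_one fun _ hτ =>
    hg _ (mul_nonneg hz (rpow_nonneg hτ.1 _))

lemma continuousOn_eulerSol (hN : 0 < N) (hg : ContinuousOn g (Ici 0)) :
    ContinuousOn (eulerSol N g) (Ici 0) := by
  have hmax : Continuous fun z => g (max z 0) :=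
    hg.comp_continuous (by fun_prop) fun z => le_max_right z 0
  have hpow : Continuous fun q : ℝ × ℝ => q.2 ^ N⁻¹ :=
    continuous_snd.rpow_const fun _ => Or.inr (inv_nonneg.2 hN.le)
  have hcont : Continuous (eulerSol N fun z => g (max z 0)) := by
    refine continuous_const.mul
      (intervalIntegral.continuous_parametric_intervalIntegral_of_continuous' ?_ 0 1)
    exact hmax.comp (continuous_fst.mul hpow)
  refine hcont.continuousOn.congr fun z hz => eulerSol_congr (fun t ht => ?_) hz
  rw [max_eq_left ht]

lemma continuousOn_comp_mul_rpow (hN : 0 < N) (hg : ContinuousOn g (Ici 0)) (hz : 0 ≤ z) :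
    ContinuousOn (fun τ : ℝ => g (z * τ ^ N⁻¹)) (Icc 0 1) :=
  hg.comp (continuousOn_const.mul
      (continuousOn_id.rpow_const fun _ _ => Or.inr (inv_nonneg.2 hN.le)))
    fun _ hτ => mul_nonneg hz (rpow_nonneg hτ.1 _)

lemma eulerSol_eq_of_hasDerivAt (hN : 0 < N) (hP : ∀ t ≥ 0, HasDerivAt P (P' t) t)
    (hP' : ContinuousOn P' (Ici 0)) (hz : 0 ≤ z) :
    eulerSol N (fun t => N * P t + t * P' t) z = P z := by
  have hPc : ContinuousOn P (Ici 0) := fun t ht => (hP t ht).continuousAt.continuousWithinAt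
  have hg : ContinuousOn (fun t => N * P t + t * P' t) (Ici 0) :=
    (continuousOn_const.mul hPc).add (continuousOn_id.mul hP')
  have hderiv (τ : ℝ) (hτ : τ ∈ Ioo (0 : ℝ) 1) :
      HasDerivAt (fun τ : ℝ => τ * P (z * τ ^ N⁻¹))
        (N⁻¹ * (N * P (z * τ ^ N⁻¹) + z * τ ^ N⁻¹ * P' (z * τ ^ N⁻¹))) τ := by
    have hpow := (hasDerivAt_rpow_const (p := N⁻¹) (Or.inl hτ.1.ne')).const_mul z
    have hcomp := (hP _ (mul_nonneg hz (rpow_nonneg hτ.1.le N⁻¹))).comp τ hpow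
    refine ((hasDerivAt_id τ).mul hcomp).congr_deriv ?_
    rw [rpow_sub_one hτ.1.ne', id, Function.comp_apply]
    have := hτ.1.ne'
    field_simp
  have hInt := intervalIntegral.integral_eq_sub_of_hasDerivAt_of_le zero_le_one
    (continuousOn_id.mul (continuousOn_comp_mul_rpow hN hPc hz)) hderiv
    ((continuousOn_const.mul (continuousOn_comp_mul_rpow hN hg hz)).intervalIntegrable_of_Icc
      zero_le_one)
  rw [intervalIntegral.integral_const_mul] at hInt
  simpa [eulerSol] using hInt

lemma hasDerivAt_eulerSol (hN : 0 < N) (hg : ∀ t, HasDerivAt g (g' t) t) (hg' : Continuous g')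
    (z : ℝ) :
    HasDerivAt (eulerSol N g) (N⁻¹ * ∫ τ in (0 : ℝ)..1, τ ^ N⁻¹ * g' (z * τ ^ N⁻¹)) z := by
  have hgc : Continuous g := continuous_iff_continuousAt.2 fun t => (hg t).continuousAt
  have hpow : Continuous fun τ : ℝ => τ ^ N⁻¹ :=
    continuous_id.rpow_const fun _ => Or.inr (inv_nonneg.2 hN.le)
  have hcomp (y : ℝ) : Continuous fun τ : ℝ => g (y * τ ^ N⁻¹) :=
    hgc.comp (continuous_const.mul hpow)
  have hcomp' : Continuous fun τ : ℝ => τ ^ N⁻¹ * g' (z * τ ^ N⁻¹) :=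
    hpow.mul (hg'.comp (continuous_const.mul hpow))
  obtain ⟨C, hC⟩ := (isCompact_closedBall (0 : ℝ) (‖z‖ + 1)).exists_bound_of_continuousOn
    hg'.continuousOn
  refine (intervalIntegral.hasDerivAt_integral_of_dominated_loc_of_deriv_le
    (F' := fun y τ => τ ^ N⁻¹ * g' (y * τ ^ N⁻¹)) (bound := fun _ => C)
    (Metric.ball_mem_nhds z one_pos) (Eventually.of_forall fun y => (hcomp y).aestronglyMeasurable)
    ((hcomp z).intervalIntegrable 0 1) hcomp'.aestronglyMeasurable ?_ (by simp) ?_).2.const_mul N⁻¹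
  · refine Eventually.of_forall fun τ hτ y hy => ?_
    rw [uIoc_of_le zero_le_one] at hτ
    have hτ0 : 0 ≤ τ ^ N⁻¹ := rpow_nonneg hτ.1.le _
    have hτ1 : τ ^ N⁻¹ ≤ 1 := rpow_le_one hτ.1.le hτ.2 (inv_nonneg.2 hN.le)
    have hy : ‖y * τ ^ N⁻¹‖ ≤ ‖z‖ + 1 := calc
      ‖y * τ ^ N⁻¹‖ = ‖y‖ * τ ^ N⁻¹ := by rw [norm_mul, norm_of_nonneg hτ0]
      _ ≤ ‖y‖ := mul_le_of_le_one_right (norm_nonneg y) hτ1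
      _ ≤ ‖z‖ + 1 := (norm_lt_of_mem_ball hy).le
    rw [norm_mul, norm_of_nonneg hτ0]
    have hbound := hC _ (mem_closedBall_zero_iff.2 hy)
    exact (mul_le_of_le_one_left (norm_nonneg _) hτ1).trans hbound
  · refine Eventually.of_forall fun τ _ y _ => ?_
    exact ((hg _).comp y ((hasDerivAt_id' y).mul_const (τ ^ N⁻¹))).congr_deriv (by ring)

lemma contDiff_eulerSol (hN : 0 < N) (hg : ContDiff ℝ 1 g) : ContDiff ℝ 1 (eulerSol N g) := by
  have hpow : Continuous fun q : ℝ × ℝ => q.2 ^ N⁻¹ :=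
    continuous_snd.rpow_const fun _ => Or.inr (inv_nonneg.2 hN.le)
  obtain ⟨hdiff, hg'⟩ := contDiff_one_iff_deriv.1 hg
  have hderiv := hasDerivAt_eulerSol hN (fun t => (hdiff t).hasDerivAt) hg'
  refine contDiff_one_iff_deriv.2 ⟨fun z => (hderiv z).differentiableAt, ?_⟩
  rw [funext fun z => (hderiv z).deriv]
  exact continuous_const.mul
    (intervalIntegral.continuous_parametric_intervalIntegral_of_continuous'
      (hpow.mul (hg'.comp (continuous_fst.mul hpow))) 0 1)

lemma eulerSol_add_mul_deriv (hN : 0 < N) (hg : ContDiff ℝ 1 g) (hz : 0 ≤ z) :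
    N * eulerSol N g z + z * deriv (eulerSol N g) z = g z := by
  obtain ⟨hdiff, hg'⟩ := contDiff_one_iff_deriv.1 hg
  have hpow : Continuous fun τ : ℝ => τ ^ N⁻¹ :=
    continuous_id.rpow_const fun _ => Or.inr (inv_nonneg.2 hN.le)
  have hInt : Continuous fun τ : ℝ => N * g (z * τ ^ N⁻¹) := by fun_prop
  have hInt' : Continuous fun τ : ℝ => z * (τ ^ N⁻¹ * deriv g (z * τ ^ N⁻¹)) := by fun_prop
  rw [(hasDerivAt_eulerSol hN (fun t => (hdiff t).hasDerivAt) hg' z).deriv, eulerSol,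
    mul_left_comm N, mul_left_comm z, ← mul_add, ← intervalIntegral.integral_const_mul,
    ← intervalIntegral.integral_const_mul, ← intervalIntegral.integral_add
      (hInt.intervalIntegrable 0 1) (hInt'.intervalIntegrable 0 1),
    ← eulerSol_eq_of_hasDerivAt hN (fun t _ => (hdiff t).hasDerivAt) hg'.continuousOn hz, eulerSol]
  simp only [mul_assoc]

end EulerEquation

lemma exists_contDiff_eqOn_Ici (n : ℕ) {f : ℝ → ℝ} (hf : ContDiffOn ℝ n f (Ici 0)) :
    ∃ g, ContDiff ℝ n g ∧ EqOn g f (Ici 0) := by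
  induction n generalizing f with
  | zero =>
    refine ⟨fun z => f (max z 0), ?_, fun z hz => congrArg f (max_eq_left hz)⟩
    exact contDiff_zero.2 (hf.continuousOn.comp_continuous (by fun_prop) fun z => le_max_right z 0)
  | succ n ih =>
    push_cast at hf ⊢
    rw [contDiffOn_succ_iff_derivWithin (uniqueDiffOn_Ici 0)] at hf
    obtain ⟨h, hh, hhf⟩ := ih hf.2.2
    have hderiv (z : ℝ) : HasDerivAt (fun z => f 0 + ∫ t in (0 : ℝ)..z, h t) (h z) z :=
      (hh.continuous.integral_hasStrictDerivAt 0 z).hasDerivAt.const_add _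
    refine ⟨_, contDiff_succ_iff_deriv.2 ⟨fun z => (hderiv z).differentiableAt, by simp, ?_⟩,
      fun z hz => ?_⟩
    · rwa [funext fun z => (hderiv z).deriv]
    · have hInt := intervalIntegral.integral_eq_sub_of_hasDerivAt_of_le hz
        (hf.1.continuousOn.mono Icc_subset_Ici_self) (f' := h) (fun t ht => ?_)
        (hh.continuous.intervalIntegrable 0 z)
      · rw [hInt, add_sub_cancel]
      · rw [hhf ht.1.le]
        exact (hf.1 t ht.1.le).hasDerivWithinAt.hasDerivAt (Ici_mem_nhds ht.1)

/-- The `[0, ∞]`-valued form of the solution `η ↦ ∫ z in Ioi η, e z * eulerSol N g z` of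
`v' = -e * eulerSol N g` vanishing at infinity. It is monotone in `g` without any measurability or
integrability assumption, and it depends on the values of `g` on `[0, ∞)` only. -/
noncomputable def eulerPotential (N : ℝ) (e g : ℝ → ℝ) (η : ℝ) : ENNReal :=
  ∫⁻ z in Ioi (max η 0), ENNReal.ofReal (e z) *
    (ENNReal.ofReal N⁻¹ * ∫⁻ τ in Ioc (0 : ℝ) 1, ENNReal.ofReal (g (z * τ ^ N⁻¹)))

section EulerPotential

variable {N : ℝ} {e f g v P P' : ℝ → ℝ} {F : ℝ → ℝ → ℝ} {η : ℝ}

lemma eulerPotential_max_zero (N : ℝ) (e g : ℝ → ℝ) (η : ℝ) :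
    eulerPotential N e g (max η 0) = eulerPotential N e g η := by
  rw [eulerPotential, eulerPotential, max_eq_left (le_max_right η 0)]

lemma antitone_eulerPotential (N : ℝ) (e g : ℝ → ℝ) : Antitone (eulerPotential N e g) :=
  fun _ _ h => lintegral_mono_set (Ioi_subset_Ioi (max_le_max_right 0 h))

lemma eulerPotential_mono (hfg : ∀ z ≥ 0, f z ≤ g z) (η : ℝ) :
    eulerPotential N e f η ≤ eulerPotential N e g η := by
  refine setLIntegral_mono' measurableSet_Ioi fun z hz => ?_
  have hz0 : 0 ≤ z := (le_max_right η 0).trans (mem_Ioi.1 hz).le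
  gcongr ENNReal.ofReal (e z) * (ENNReal.ofReal N⁻¹ * ?_)
  exact setLIntegral_mono' measurableSet_Ioc fun τ hτ =>
    ENNReal.ofReal_le_ofReal (hfg _ (mul_nonneg hz0 (rpow_nonneg hτ.1.le _)))

lemma eulerPotential_congr (hfg : EqOn f g (Ici 0)) (η : ℝ) :
    eulerPotential N e f η = eulerPotential N e g η :=
  le_antisymm (eulerPotential_mono (fun _ hz => (hfg hz).le) η)
    (eulerPotential_mono (fun _ hz => (hfg hz).ge) η)

lemma ofReal_eulerSol (hN : 0 < N) (hg : ContinuousOn g (Ici 0)) (hg0 : ∀ z ≥ 0, 0 ≤ g z) {z : ℝ}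
    (hz : 0 ≤ z) :
    ENNReal.ofReal N⁻¹ * ∫⁻ τ in Ioc (0 : ℝ) 1, ENNReal.ofReal (g (z * τ ^ N⁻¹)) =
      ENNReal.ofReal (eulerSol N g z) := by
  rw [eulerSol, ENNReal.ofReal_mul (inv_nonneg.2 hN.le),
    intervalIntegral.integral_of_le zero_le_one, ofReal_integral_eq_lintegral_ofReal]
  · exact (continuousOn_comp_mul_rpow hN hg hz).integrableOn_Icc.mono_set Ioc_subset_Icc_self
  · filter_upwards [ae_restrict_mem measurableSet_Ioc] with τ hτ
    exact hg0 _ (mul_nonneg hz (rpow_nonneg hτ.1.le _))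

lemma eulerPotential_eq_lintegral (hN : 0 < N) (he : ∀ z ≥ 0, 0 ≤ e z)
    (hg : ContinuousOn g (Ici 0)) (hg0 : ∀ z ≥ 0, 0 ≤ g z) (hη : 0 ≤ η) :
    eulerPotential N e g η = ∫⁻ z in Ioi η, ENNReal.ofReal (e z * eulerSol N g z) := by
  rw [eulerPotential, max_eq_left hη]
  refine setLIntegral_congr_fun measurableSet_Ioi fun z hz => ?_
  have hz0 : 0 ≤ z := hη.trans (mem_Ioi.1 hz).le
  rw [ENNReal.ofReal_mul (he z hz0)]
  congr 1
  exact ofReal_eulerSol hN hg hg0 hz0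

lemma eulerPotential_eq_ofReal (hN : 0 < N) (he : ∀ z ≥ 0, 0 ≤ e z)
    (hv : ∀ z ≥ 0, HasDerivAt v (-(e z * P z)) z) (hvlim : Tendsto v atTop (𝓝 0))
    (hP : ∀ z ≥ 0, HasDerivAt P (P' z) z) (hP' : ContinuousOn P' (Ici 0))
    (hg0 : ∀ z ≥ 0, 0 ≤ N * P z + z * P' z) (hη : 0 ≤ η) :
    eulerPotential N e (fun z => N * P z + z * P' z) η = ENNReal.ofReal (v η) := by
  have hPc : ContinuousOn P (Ici 0) := fun t ht => (hP t ht).continuousAt.continuousWithinAt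
  have hP0 (z : ℝ) (hz : 0 ≤ z) : 0 ≤ P z := by
    rw [← eulerSol_eq_of_hasDerivAt hN hP hP' hz]
    exact eulerSol_nonneg hN hg0 hz
  have hv' (z : ℝ) (hz : z ∈ Ici η) : HasDerivAt v (-(e z * P z)) z := hv z (hη.trans hz)
  have hneg (z : ℝ) (hz : z ∈ Ioi η) : -(e z * P z) ≤ 0 :=
    neg_nonpos.2 (mul_nonneg (he z (hη.trans hz.le)) (hP0 z (hη.trans hz.le)))
  have hInt := integrable_neg_iff.1 (integrableOn_Ioi_deriv_of_nonpos' hv' hneg hvlim)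
  have hvη := integral_Ioi_of_hasDerivAt_of_nonpos' hv' hneg hvlim
  rw [integral_neg, zero_sub, neg_inj] at hvη
  have hg : ContinuousOn (fun z => N * P z + z * P' z) (Ici 0) :=
    (continuousOn_const.mul hPc).add (continuousOn_id.mul hP')
  rw [eulerPotential_eq_lintegral hN he hg hg0 hη, ← hvη, ofReal_integral_eq_lintegral_ofReal hInt]
  · refine setLIntegral_congr_fun measurableSet_Ioi fun z hz => ?_
    rw [eulerSol_eq_of_hasDerivAt hN hP hP' (hη.trans hz.le)]
  · filter_upwards [ae_restrict_mem measurableSet_Ioi] with z hz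
    exact neg_nonpos.1 (hneg z hz)

lemma aemeasurable_eulerPotential_integrand (N : ℝ) (he : ContinuousOn e (Ici 0))
    (hg : Measurable g) :
    AEMeasurable (fun z => ENNReal.ofReal (e z) *
      (ENNReal.ofReal N⁻¹ * ∫⁻ τ in Ioc (0 : ℝ) 1, ENNReal.ofReal (g (z * τ ^ N⁻¹))))
      (volume.restrict (Ioi 0)) := by
  have he' := (he.mono Ioi_subset_Ici_self).aemeasurable (μ := volume) measurableSet_Ioi
  refine he'.ennreal_ofReal.mul (measurable_const.mul ?_).aemeasurable
  refine Measurable.lintegral_prod_right'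
    (f := fun q : ℝ × ℝ => ENNReal.ofReal (g (q.1 * q.2 ^ N⁻¹))) ?_
  exact (hg.comp (by fun_prop)).ennreal_ofReal

lemma continuousOn_toReal_eulerPotential (he : ContinuousOn e (Ici 0)) (hg : Measurable g)
    (h0 : eulerPotential N e g 0 ≠ ⊤) :
    ContinuousOn (fun η => (eulerPotential N e g η).toReal) (Ici 0) := by
  have hmeas := aemeasurable_eulerPotential_integrand N he hg
  rw [eulerPotential, max_self] at h0
  have hInt := integrable_toReal_of_lintegral_ne_top hmeas h0
  refine (IntegrableOn.continuousOn_Ici_primitive_Ioi hInt).congr fun η hη => ?_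
  have hle := Measure.restrict_mono_set volume (Ioi_subset_Ioi (mem_Ici.1 hη))
  dsimp only
  rw [eulerPotential, max_eq_left hη, integral_toReal (hmeas.mono_measure hle)]
  exact ae_mono hle (ae_lt_top' hmeas h0)

lemma toReal_eulerPotential (hN : 0 < N) (he : ContinuousOn e (Ici 0)) (he0 : ∀ z ≥ 0, 0 ≤ e z)
    (hg : ContinuousOn g (Ici 0)) (hg0 : ∀ z ≥ 0, 0 ≤ g z) (h0 : eulerPotential N e g 0 ≠ ⊤)
    (hη : 0 ≤ η) :
    (eulerPotential N e g η).toReal =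
      (eulerPotential N e g 0).toReal - ∫ z in (0 : ℝ)..η, e z * eulerSol N g z := by
  have hnonneg (z : ℝ) (hz : 0 ≤ z) : 0 ≤ e z * eulerSol N g z :=
    mul_nonneg (he0 z hz) (eulerSol_nonneg hN hg0 hz)
  have hcont : ContinuousOn (fun z => e z * eulerSol N g z) (Ici 0) :=
    he.mul (continuousOn_eulerSol hN hg)
  have hpot {ξ : ℝ} (hξ : 0 ≤ ξ) := eulerPotential_eq_lintegral hN he0 hg hg0 hξ
  have hval {ξ : ℝ} (hξ : 0 ≤ ξ) :
      (eulerPotential N e g ξ).toReal = ∫ z in Ioi ξ, e z * eulerSol N g z := by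
    rw [hpot hξ, integral_eq_lintegral_of_nonneg_ae]
    · filter_upwards [ae_restrict_mem measurableSet_Ioi] with z hz using hnonneg z (hξ.trans hz.le)
    · exact (hcont.mono fun z hz => hξ.trans (mem_Ioi.1 hz).le).aestronglyMeasurable
        measurableSet_Ioi
  have hInt : IntegrableOn (fun z => e z * eulerSol N g z) (Ioi 0) := by
    refine ⟨(hcont.mono Ioi_subset_Ici_self).aestronglyMeasurable measurableSet_Ioi, ?_⟩
    rw [hasFiniteIntegral_iff_ofReal, ← hpot le_rfl]
    · exact h0.lt_top
    · filter_upwards [ae_restrict_mem measurableSet_Ioi] with z hz using hnonneg z hz.le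
  rw [hval hη, hval le_rfl, ← intervalIntegral.integral_Ioi_sub_Ioi' hInt
    (hInt.mono_set (Ioi_subset_Ioi hη)), sub_sub_cancel]

section FixedPoint

variable {vm vp : ℝ → ℝ}

-- The greatest fixed point exists by Knaster–Tarski, without any compactness or continuity.
theorem exists_eulerPotential_fixedPoint
    (hmono : ∀ z ≥ 0, MonotoneOn (F z) (Icc 0 (vp z))) (hvm : ∀ z ≥ 0, vm z ∈ Icc 0 (vp z))
    (hsup : ∀ η ≥ 0, eulerPotential N e (fun z => F z (vp z)) η ≤ ENNReal.ofReal (vp η))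
    (hsub : ∀ η ≥ 0, ENNReal.ofReal (vm η) ≤ eulerPotential N e (fun z => F z (vm z)) η) :
    ∃ w : ℝ → ENNReal, (∀ η, eulerPotential N e (fun z => F z (w z).toReal) η = w η) ∧
      ∀ z ≥ 0, ENNReal.ofReal (vm z) ≤ w z ∧ w z ≤ ENNReal.ofReal (vp z) := by
  have hvp (z : ℝ) (hz : 0 ≤ z) : 0 ≤ vp z := (hvm z hz).1.trans (hvm z hz).2
  have hmem (a : ENNReal) {z : ℝ} (hz : 0 ≤ z) :
      (min a (ENNReal.ofReal (vp z))).toReal ∈ Icc 0 (vp z) :=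
    ⟨ENNReal.toReal_nonneg, ENNReal.toReal_le_of_le_ofReal (hvp z hz) (min_le_right _ _)⟩
  let T : (ℝ → ENNReal) →o (ℝ → ENNReal) :=
    { toFun := fun w =>
        eulerPotential N e fun z => F z (min (w z) (ENNReal.ofReal (vp z))).toReal
      monotone' := fun w₁ w₂ h η => eulerPotential_mono (fun z hz =>
        hmono z hz (hmem _ hz) (hmem _ hz) <| ENNReal.toReal_mono
          (ne_top_of_le_ne_top ENNReal.ofReal_ne_top (min_le_right _ _))
          (min_le_min_right _ (h z))) η }
  have hT (w : ℝ → ENNReal) (η : ℝ) : T w η =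
      eulerPotential N e (fun z => F z (min (w z) (ENNReal.ofReal (vp z))).toReal) η := rfl
  have hfix : T T.gfp = T.gfp := T.map_gfp
  have hle (z : ℝ) (hz : 0 ≤ z) : T.gfp z ≤ ENNReal.ofReal (vp z) := by
    rw [← hfix]
    exact (eulerPotential_mono (fun y hy => hmono y hy (hmem _ hy) ⟨hvp y hy, le_rfl⟩
      (hmem _ hy).2) z).trans (hsup z hz)
  have hge : (fun z => ENNReal.ofReal (vm (max z 0))) ≤ T.gfp := by
    refine T.le_gfp fun η => (hsub _ (le_max_right η 0)).trans ?_
    rw [eulerPotential_max_zero, hT]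
    refine eulerPotential_mono (fun z hz => le_of_eq ?_) η
    rw [max_eq_left hz, min_eq_left (ENNReal.ofReal_le_ofReal (hvm z hz).2),
      ENNReal.toReal_ofReal (hvm z hz).1]
  refine ⟨T.gfp, fun η => ?_, fun z hz => ⟨?_, hle z hz⟩⟩
  · rw [← congrFun hfix η, hT]
    refine eulerPotential_congr (fun z hz => ?_) η
    simp only [min_eq_left (hle z hz)]
  · simpa only [max_eq_left hz] using hge z

lemma continuous_toReal_eulerPotential_fixedPoint (he : ContinuousOn e (Ici 0))
    (hF : ContinuousOn (Function.uncurry F) (Ici 0 ×ˢ univ)) {w : ℝ → ENNReal}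
    (hw : ∀ η, eulerPotential N e (fun z => F z (w z).toReal) η = w η) (h0 : w 0 ≠ ⊤) :
    Continuous fun z => (w z).toReal := by
  have hFmax : Continuous fun q : ℝ × ℝ => F (max q.1 0) q.2 :=
    hF.comp_continuous (by fun_prop : Continuous fun q : ℝ × ℝ => (max q.1 0, q.2))
      fun q => mem_prod.2 ⟨le_max_right q.1 0, mem_univ _⟩
  have hw_anti : Antitone w := funext hw ▸ antitone_eulerPotential N e _
  have hpot (η : ℝ) : eulerPotential N e (fun z => F (max z 0) (w z).toReal) η = w η := by
    rw [← hw]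
    exact eulerPotential_congr (fun z hz => by simp only [max_eq_left (mem_Ici.1 hz)]) η
  have hmeas := hFmax.measurable.comp (measurable_id.prodMk hw_anti.measurable.ennreal_toReal)
  have hcont := (continuousOn_toReal_eulerPotential he hmeas ((hpot 0).trans_ne h0)).comp_continuous
    (by fun_prop : Continuous fun z : ℝ => max z 0) fun z => le_max_right z 0
  refine hcont.congr fun η => congrArg ENNReal.toReal ?_
  rw [eulerPotential_max_zero]
  exact hpot η

theorem exists_eulerSol_integral_eq (hN : 0 < N) (he : ContinuousOn e (Ici 0))
    (he0 : ∀ z ≥ 0, 0 ≤ e z) (hF : ContinuousOn (Function.uncurry F) (Ici 0 ×ˢ univ))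
    (hF0 : ∀ z ≥ 0, 0 ≤ F z 0) (hmono : ∀ z ≥ 0, MonotoneOn (F z) (Icc 0 (vp z)))
    (hvm : ∀ z ≥ 0, vm z ∈ Icc 0 (vp z))
    (hsup : ∀ η ≥ 0, eulerPotential N e (fun z => F z (vp z)) η ≤ ENNReal.ofReal (vp η))
    (hsub : ∀ η ≥ 0, ENNReal.ofReal (vm η) ≤ eulerPotential N e (fun z => F z (vm z)) η) :
    ∃ v : ℝ → ℝ, Continuous v ∧ (∀ z ≥ 0, v z ∈ Icc (vm z) (vp z)) ∧
      ∀ η ≥ 0, v η = v 0 - ∫ z in (0 : ℝ)..η, e z * eulerSol N (fun z => F z (v z)) z := by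
  obtain ⟨w, hw, hbound⟩ := exists_eulerPotential_fixedPoint hmono hvm hsup hsub
  have htop (z : ℝ) (hz : 0 ≤ z) : w z ≠ ⊤ :=
    ne_top_of_le_ne_top ENNReal.ofReal_ne_top (hbound z hz).2
  have hvp (z : ℝ) (hz : 0 ≤ z) : 0 ≤ vp z := (hvm z hz).1.trans (hvm z hz).2
  have hvc := continuous_toReal_eulerPotential_fixedPoint he hF hw (htop 0 le_rfl)
  have hvmem (z : ℝ) (hz : 0 ≤ z) : (w z).toReal ∈ Icc (vm z) (vp z) :=
    ⟨(ENNReal.ofReal_le_iff_le_toReal (htop z hz)).1 (hbound z hz).1,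
      ENNReal.toReal_le_of_le_ofReal (hvp z hz) (hbound z hz).2⟩
  refine ⟨_, hvc, hvmem, fun η hη => ?_⟩
  have hval := toReal_eulerPotential (g := fun z => F z (w z).toReal) hN he he0
    (hF.comp (continuous_id.prodMk hvc).continuousOn fun z hz => mem_prod.2 ⟨hz, mem_univ _⟩)
    (fun z hz => (hF0 z hz).trans (hmono z hz ⟨le_rfl, hvp z hz⟩
      ⟨ENNReal.toReal_nonneg, (hvmem z hz).2⟩ ENNReal.toReal_nonneg))
    ((hw 0).trans_ne (htop 0 le_rfl)) hη
  rwa [hw, hw] at hval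

end FixedPoint

end EulerPotential

lemma contDiffOn_succ_of_hasDerivWithinAt {n : ℕ} {s : Set ℝ} {v v' : ℝ → ℝ}
    (hs : UniqueDiffOn ℝ s) (hv : ∀ z ∈ s, HasDerivWithinAt v (v' z) s z)
    (hv' : ContDiffOn ℝ n v' s) : ContDiffOn ℝ (n + 1) v s :=
  (contDiffOn_succ_iff_derivWithin hs).2 ⟨fun z hz => (hv z hz).differentiableWithinAt, by simp,
    hv'.congr fun z hz => (hv z hz).derivWithin (hs z hz)⟩

lemma hasDerivWithinAt_sub_integral {v q : ℝ → ℝ} (hq : ContinuousOn q (Ici 0))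
    (hv : ∀ η ≥ 0, v η = v 0 - ∫ z in (0 : ℝ)..η, q z) {z : ℝ} (hz : 0 ≤ z) :
    HasDerivWithinAt v (-q z) (Ici 0) z := by
  have hqmax : Continuous fun z => q (max z 0) :=
    hq.comp_continuous (by fun_prop) fun z => le_max_right z 0
  have hderiv := ((hqmax.integral_hasStrictDerivAt 0 z).hasDerivAt.const_sub (v 0)).hasDerivWithinAt
    (s := Ici 0)
  rw [max_eq_left hz] at hderiv
  have hcongr (η : ℝ) (hη : 0 ≤ η) : v η = v 0 - ∫ z in (0 : ℝ)..η, q (max z 0) := by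
    rw [hv η hη]
    refine congrArg (v 0 - ·) (intervalIntegral.integral_congr fun t ht => ?_)
    rw [uIcc_of_le hη] at ht
    simp only [max_eq_left ht.1]
  exact hderiv.congr hcongr (hcongr z hz)

section EulerSystem

variable {N : ℝ} {e v vm vp : ℝ → ℝ} {F : ℝ → ℝ → ℝ}

/-- Solutions `v` on `[0, ∞)` of the system `v' = -e * P`, `N * P + z * P' = F z v`, of class `C²`
up to the boundary. -/
structure IsEulerSystemSol (N : ℝ) (e : ℝ → ℝ) (F : ℝ → ℝ → ℝ) (v P : ℝ → ℝ) : Prop where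
  contDiffOn : ContDiffOn ℝ 2 v (Ici 0)
  contDiff : ContDiff ℝ 1 P
  hasDerivWithinAt {z : ℝ} (hz : 0 ≤ z) : HasDerivWithinAt v (-(e z * P z)) (Ici 0) z
  euler {z : ℝ} (hz : 0 ≤ z) : N * P z + z * deriv P z = F z (v z)

lemma exists_isEulerSystemSol (hN : 0 < N) (he : ContDiffOn ℝ 1 e (Ici 0))
    (hF : ContDiffOn ℝ 1 (Function.uncurry F) (Ici 0 ×ˢ univ)) (hv : Continuous v)
    (hInt : ∀ η ≥ 0, v η = v 0 - ∫ z in (0 : ℝ)..η, e z * eulerSol N (fun z => F z (v z)) z) :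
    ∃ P, IsEulerSystemSol N e F v P := by
  have hFv {n : ℕ} (hn : n ≤ 1) (hv : ContDiffOn ℝ n v (Ici 0)) :
      ContDiffOn ℝ n (fun z => F z (v z)) (Ici 0) :=
    (hF.of_le (mod_cast hn)).comp (contDiffOn_id.prodMk hv)
      fun z hz => mem_prod.2 ⟨hz, mem_univ _⟩
  have hFv₀ := (hFv zero_le_one (contDiffOn_zero.2 hv.continuousOn)).continuousOn
  have hq := he.continuousOn.mul (continuousOn_eulerSol hN hFv₀)
  have hv₁ : ContDiffOn ℝ 1 v (Ici 0) :=
    contDiffOn_succ_of_hasDerivWithinAt (n := 0) (uniqueDiffOn_Ici 0)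
      (fun z hz => hasDerivWithinAt_sub_integral hq hInt hz) (contDiffOn_zero.2 hq.neg)
  obtain ⟨g, hg, hgF⟩ := exists_contDiff_eqOn_Ici 1 (hFv le_rfl hv₁)
  have hP := contDiff_eulerSol hN hg
  have hderiv (z : ℝ) (hz : 0 ≤ z) :
      HasDerivWithinAt v (-(e z * eulerSol N g z)) (Ici 0) z := by
    rw [eulerSol_congr hgF hz]
    exact hasDerivWithinAt_sub_integral hq hInt hz
  refine ⟨eulerSol N g, ?_, hP, fun hz => hderiv _ hz, fun hz => ?_⟩
  · exact contDiffOn_succ_of_hasDerivWithinAt (n := 1) (uniqueDiffOn_Ici 0) hderiv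
      (he.mul hP.contDiffOn).neg
  · rw [eulerSol_add_mul_deriv hN hg hz, hgF hz]

theorem exists_isEulerSystemSol_mem_Icc (hN : 0 < N) (he : ContDiffOn ℝ 1 e (Ici 0))
    (he0 : ∀ z ≥ 0, 0 ≤ e z) (hF : ContDiffOn ℝ 1 (Function.uncurry F) (Ici 0 ×ˢ univ))
    (hF0 : ∀ z ≥ 0, 0 ≤ F z 0) (hmono : ∀ z ≥ 0, MonotoneOn (F z) (Icc 0 (vp z)))
    (hvm : ∀ z ≥ 0, vm z ∈ Icc 0 (vp z))
    (hsup : ∀ η ≥ 0, eulerPotential N e (fun z => F z (vp z)) η ≤ ENNReal.ofReal (vp η))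
    (hsub : ∀ η ≥ 0, ENNReal.ofReal (vm η) ≤ eulerPotential N e (fun z => F z (vm z)) η) :
    ∃ v P, IsEulerSystemSol N e F v P ∧ ∀ z ≥ 0, v z ∈ Icc (vm z) (vp z) := by
  obtain ⟨v, hv, hmem, hInt⟩ :=
    exists_eulerSol_integral_eq hN he.continuousOn he0 hF.continuousOn hF0 hmono hvm hsup hsub
  obtain ⟨P, hP⟩ := exists_isEulerSystemSol hN he hF hv hInt
  exact ⟨v, P, hP, hmem⟩

end EulerSystem

lemma profileOp_eq_of_hasDerivAt₂ {W W' : ℝ → ℝ} {W'' z : ℝ} (N s μ : ℝ)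
    (hW : HasDerivAt₂ W W' W'' z) :
    profileOp N s μ W z =
      4 * z * (1 + z) * W'' + (4 * N + (6 + 4 * s) * z) * W' z + (s * (s + 1) + μ) * W z := by
  rw [profileOp, hW.deriv_deriv, hW.hasDerivAt.deriv]

lemma profileOp_congr {W V : ℝ → ℝ} {z : ℝ} (N s μ : ℝ) (h : W =ᶠ[𝓝 z] V) :
    profileOp N s μ W z = profileOp N s μ V z := by
  simp only [profileOp, h.deriv.deriv_eq, h.deriv_eq, h.eq_of_nhds]

section Gauge

variable {N s α A p z : ℝ} {v P W : ℝ → ℝ}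

/-- The value of the profile operator at `(1 + z) ^ (-(s + α) / 2)` is this constant times
`(1 + z) ^ (-(s + α) / 2 - 1)`; it is positive exactly in the subcritical range. -/
def profileGap (N s α : ℝ) : ℝ := (s + α) * (s + 1 - α - 2 * N)

/-- The factor `Ψ` for which the substitution `W = Ψ * v` turns the profile equation into an Euler
system for `v`. A large `A` makes the zeroth order coefficient `gaugePotential` large on bounded
intervals, so that it dominates the derivative of the power nonlinearity. -/
noncomputable def profileGauge (s α A z : ℝ) : ℝ :=
  (1 + z) ^ (-(s + 1 - α) / 2) * exp (-(A * (1 + z) ^ (1 / 2 - α)))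

/-- The weight `e` in the equation `v' = -e * P` of the Euler system. -/
noncomputable def gaugeWeight (N α A z : ℝ) : ℝ :=
  (1 + z) ^ (N - 1 / 2 - α) * exp (2 * A * (1 + z) ^ (1 / 2 - α))

/-- The zeroth order coefficient of the profile operator after the substitution `W = Ψ * v`. -/
noncomputable def gaugePotential (N s α A z : ℝ) : ℝ :=
  (z * (A * (2 * α - 1) * (1 + z) ^ (1 / 2 - α)) ^ 2
    + 2 * N * (A * (2 * α - 1) * (1 + z) ^ (1 / 2 - α)) + 2 * N * (2 * α - 1)
    + profileGap N s α) / (1 + z)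

/-- The normalisation `4 (1 + z) Ψ e` of the Euler operator in the transformed equation. -/
noncomputable def gaugeFactor (N s α A z : ℝ) : ℝ :=
  4 * (1 + z) * profileGauge s α A z * gaugeWeight N α A z

lemma profileGauge_pos (hz : 0 < 1 + z) : 0 < profileGauge s α A z := by
  unfold profileGauge; positivity

lemma gaugeWeight_pos (hz : 0 < 1 + z) : 0 < gaugeWeight N α A z := by
  unfold gaugeWeight; positivity

lemma gaugeFactor_pos (hz : 0 < 1 + z) : 0 < gaugeFactor N s α A z := by
  have := profileGauge_pos (s := s) (α := α) (A := A) hz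
  have := gaugeWeight_pos (N := N) (α := α) (A := A) hz
  unfold gaugeFactor
  positivity

lemma contDiffAt_one_add_rpow {n : WithTop ℕ∞} (a : ℝ) (hz : 0 < 1 + z) :
    ContDiffAt ℝ n (fun z : ℝ => (1 + z) ^ a) z :=
  ContDiffAt.rpow_const_of_ne (by fun_prop) hz.ne'

lemma contDiffAt_profileGauge {n : WithTop ℕ∞} (hz : 0 < 1 + z) :
    ContDiffAt ℝ n (profileGauge s α A) z :=
  (contDiffAt_one_add_rpow _ hz).mul
    (contDiffAt_const.mul (contDiffAt_one_add_rpow _ hz)).neg.exp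

lemma contDiffAt_gaugeWeight {n : WithTop ℕ∞} (hz : 0 < 1 + z) :
    ContDiffAt ℝ n (gaugeWeight N α A) z :=
  (contDiffAt_one_add_rpow _ hz).mul
    (contDiffAt_const.mul (contDiffAt_one_add_rpow _ hz)).exp

lemma contDiffAt_gaugePotential {n : WithTop ℕ∞} (hz : 0 < 1 + z) :
    ContDiffAt ℝ n (gaugePotential N s α A) z := by
  have := contDiffAt_one_add_rpow (n := n) (1 / 2 - α) hz
  unfold gaugePotential
  fun_prop (disch := exact hz.ne')

lemma contDiffAt_gaugeFactor {n : WithTop ℕ∞} (hz : 0 < 1 + z) :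
    ContDiffAt ℝ n (gaugeFactor N s α A) z := by
  have := contDiffAt_profileGauge (n := n) (s := s) (α := α) (A := A) hz
  have := contDiffAt_gaugeWeight (n := n) (N := N) (α := α) (A := A) hz
  unfold gaugeFactor
  fun_prop

lemma hasDerivAt_one_add_rpow (a : ℝ) (hz : 0 < 1 + z) :
    HasDerivAt (fun z : ℝ => (1 + z) ^ a) (a * (1 + z) ^ a / (1 + z)) z := by
  convert ((hasDerivAt_id' z).const_add 1).rpow_const (p := a) (Or.inl hz.ne') using 1
  rw [rpow_sub_one hz.ne']
  ring

lemma hasDerivAt_profileGauge (hz : 0 < 1 + z) :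
    HasDerivAt (profileGauge s α A) (profileGauge s α A z * ((-(s + 1 - α) / 2
      + A * (α - 1 / 2) * (1 + z) ^ (1 / 2 - α)) / (1 + z))) z := by
  refine ((hasDerivAt_one_add_rpow (-(s + 1 - α) / 2) hz).mul
    ((hasDerivAt_one_add_rpow (1 / 2 - α) hz).const_mul A).neg.exp).congr_deriv ?_
  simp only [profileGauge, Pi.neg_apply]
  field_simp
  ring

lemma hasDerivAt_gaugeWeight (hz : 0 < 1 + z) :
    HasDerivAt (gaugeWeight N α A) (gaugeWeight N α A z * ((N - 1 / 2 - α
      - A * (2 * α - 1) * (1 + z) ^ (1 / 2 - α)) / (1 + z))) z := by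
  refine ((hasDerivAt_one_add_rpow (N - 1 / 2 - α) hz).mul
    ((hasDerivAt_one_add_rpow (1 / 2 - α) hz).const_mul (2 * A)).exp).congr_deriv ?_
  simp only [gaugeWeight]
  field_simp
  ring

lemma hasDerivAt₂_profileGauge (hz : 0 < 1 + z) :
    HasDerivAt₂ (profileGauge s α A)
      (fun z => profileGauge s α A z * ((-(s + 1 - α) / 2
        + A * (α - 1 / 2) * (1 + z) ^ (1 / 2 - α)) / (1 + z)))
      (profileGauge s α A z * (((-(s + 1 - α) / 2 + A * (α - 1 / 2) * (1 + z) ^ (1 / 2 - α)) ^ 2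
        - (-(s + 1 - α) / 2 + A * (α - 1 / 2) * (1 + z) ^ (1 / 2 - α))
        - A * (α - 1 / 2) ^ 2 * (1 + z) ^ (1 / 2 - α)) / (1 + z) ^ 2)) z := by
  refine ⟨?_, ?_⟩
  · filter_upwards [(continuous_const.add continuous_id).continuousAt.eventually (lt_mem_nhds hz)]
      with y hy using hasDerivAt_profileGauge hy
  refine ((hasDerivAt_profileGauge hz).mul (HasDerivAt.div
    (((hasDerivAt_one_add_rpow (1 / 2 - α) hz).const_mul (A * (α - 1 / 2))).const_add
      (-(s + 1 - α) / 2)) ((hasDerivAt_id' z).const_add 1) hz.ne')).congr_deriv ?_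
  rw [Pi.div_apply]
  field_simp
  ring

theorem profileOp_profileGauge_mul (hz : 0 < 1 + z) {P' : ℝ}
    (hv : ∀ᶠ y in 𝓝 z, HasDerivAt v (-(gaugeWeight N α A y * P y)) y) (hP : HasDerivAt P P' z) :
    profileOp N s (α * (1 - α)) (fun y => profileGauge s α A y * v y) z =
      gaugePotential N s α A z * (profileGauge s α A z * v z)
        - gaugeFactor N s α A z * (N * P z + z * P') := by
  have hv₂ : HasDerivAt₂ v (fun y => -(gaugeWeight N α A y * P y)) _ z :=
    ⟨hv, ((hasDerivAt_gaugeWeight hz).mul hP).neg⟩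
  rw [profileOp_eq_of_hasDerivAt₂ _ _ _ ((hasDerivAt₂_profileGauge hz).mul hv₂)]
  simp only [gaugePotential, profileGap, gaugeFactor]
  field_simp
  ring

lemma contDiffAt_div_profileGauge {n : WithTop ℕ∞} (hW : ContDiffAt ℝ n W z) (hz : 0 < 1 + z) :
    ContDiffAt ℝ n (fun y => W y / profileGauge s α A y) z :=
  hW.div (contDiffAt_profileGauge hz) (profileGauge_pos hz).ne'

/-- The function `P` of the Euler system attached to a function `W` by the substitution
`W = Ψ * v`, `v' = -e * P`. -/
noncomputable def gaugeFlux (N s α A : ℝ) (W : ℝ → ℝ) (z : ℝ) : ℝ :=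
  -deriv (fun y => W y / profileGauge s α A y) z / gaugeWeight N α A z

lemma hasDerivAt_div_profileGauge (hW : ContDiffAt ℝ 1 W z) (hz : 0 < 1 + z) :
    HasDerivAt (fun y => W y / profileGauge s α A y)
      (-(gaugeWeight N α A z * gaugeFlux N s α A W z)) z := by
  have hv := ((contDiffAt_div_profileGauge (s := s) (α := α) (A := A) hW hz).differentiableAt
    one_ne_zero).hasDerivAt
  refine hv.congr_deriv ?_
  rw [gaugeFlux, mul_div_cancel₀ _ (gaugeWeight_pos hz).ne', neg_neg]

lemma contDiffAt_gaugeFlux (hW : ContDiffAt ℝ 2 W z) (hz : 0 < 1 + z) :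
    ContDiffAt ℝ 1 (gaugeFlux N s α A W) z :=
  ((contDiffAt_div_profileGauge hW hz).derivWithin (m := 1) one_add_one_eq_two.le).neg.div
    (contDiffAt_gaugeWeight hz) (gaugeWeight_pos hz).ne'

lemma gaugeFlux_add_mul_deriv (hW : ContDiffAt ℝ 2 W z) (hz : 0 < 1 + z) :
    N * gaugeFlux N s α A W z + z * deriv (gaugeFlux N s α A W) z =
      (gaugePotential N s α A z * W z - profileOp N s (α * (1 - α)) W z)
        / gaugeFactor N s α A z := by
  have hz' : ∀ᶠ y : ℝ in 𝓝 z, 0 < 1 + y :=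
    (continuous_const.add continuous_id).continuousAt.eventually (lt_mem_nhds hz)
  have hW₁ : ∀ᶠ y in 𝓝 z, ContDiffAt ℝ 1 W y :=
    (hW.eventually (by simp)).mono fun y hy => hy.of_le one_le_two
  have hv : ∀ᶠ y in 𝓝 z, HasDerivAt (fun y => W y / profileGauge s α A y)
      (-(gaugeWeight N α A y * gaugeFlux N s α A W y)) y := by
    filter_upwards [hz', hW₁] with y hy hWy using hasDerivAt_div_profileGauge hWy hy
  have hcancel : (fun y => profileGauge s α A y * (W y / profileGauge s α A y)) =ᶠ[𝓝 z] W := by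
    filter_upwards [hz'] with y hy using mul_div_cancel₀ _ (profileGauge_pos hy).ne'
  have hop := profileOp_profileGauge_mul (s := s) hz hv
    ((contDiffAt_gaugeFlux hW hz).differentiableAt one_ne_zero).hasDerivAt
  rw [profileOp_congr _ _ _ hcancel, hcancel.eq_of_nhds] at hop
  rw [eq_div_iff (gaugeFactor_pos hz).ne', hop]
  ring

theorem eulerPotential_profileGauge (hN : 0 < N) (hW : ∀ z ≥ 0, ContDiffAt ℝ 2 W z)
    (hlim : Tendsto (fun z => W z / profileGauge s α A z) atTop (𝓝 0))
    (hLW : ∀ z ≥ 0, profileOp N s (α * (1 - α)) W z ≤ gaugePotential N s α A z * W z)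
    {η : ℝ} (hη : 0 ≤ η) :
    eulerPotential N (gaugeWeight N α A) (fun z => (gaugePotential N s α A z * W z
        - profileOp N s (α * (1 - α)) W z) / gaugeFactor N s α A z) η =
      ENNReal.ofReal (W η / profileGauge s α A η) := by
  have hP (z : ℝ) (hz : 0 ≤ z) : ContDiffAt ℝ 1 (gaugeFlux N s α A W) z :=
    contDiffAt_gaugeFlux (hW z hz) (by linarith)
  have heuler (z : ℝ) (hz : 0 ≤ z) :=
    gaugeFlux_add_mul_deriv (N := N) (s := s) (α := α) (A := A) (hW z hz) (by linarith)
  rw [← eulerPotential_congr fun z hz => heuler z hz]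
  refine eulerPotential_eq_ofReal (v := fun z => W z / profileGauge s α A z) hN
    (fun z hz => (gaugeWeight_pos (by linarith)).le)
    (fun z hz => hasDerivAt_div_profileGauge ((hW z hz).of_le one_le_two) (by linarith)) hlim
    (fun z hz => ((hP z hz).differentiableAt one_ne_zero).hasDerivAt)
    (fun z hz => ((hP z hz).derivWithin (m := 0) (by simp)).continuousAt.continuousWithinAt)
    (fun z hz => ?_) hη
  rw [heuler z hz]
  exact div_nonneg (sub_nonneg.2 (hLW z hz)) (gaugeFactor_pos (by linarith)).le

end Gauge

lemma monotoneOn_mul_sub_rpow {p q b : ℝ} (hp : 1 ≤ p) (hq : p * b ^ (p - 1) ≤ q) :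
    MonotoneOn (fun t => q * t - t ^ p) (Icc 0 b) := by
  have hderiv (t : ℝ) : HasDerivAt (fun t => q * t - t ^ p) (q * 1 - p * t ^ (p - 1)) t :=
    ((hasDerivAt_id' t).const_mul q).sub (hasDerivAt_rpow_const (Or.inr hp))
  refine monotoneOn_of_deriv_nonneg (convex_Icc 0 b)
    (fun t _ => (hderiv t).continuousAt.continuousWithinAt)
    (fun t _ => (hderiv t).differentiableAt.differentiableWithinAt) fun t ht => ?_
  rw [interior_Icc] at ht
  have hpow : t ^ (p - 1) ≤ b ^ (p - 1) :=
    rpow_le_rpow ht.1.le ht.2.le (by linarith)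
  rw [(hderiv t).deriv]
  nlinarith

section Density

variable {N s α A p z : ℝ} {v P W : ℝ → ℝ}

/-- The right-hand side of the Euler system `N * P + z * P' = F z v` equivalent to the profile
equation. -/
noncomputable def gaugeDensity (N s α A p z v : ℝ) : ℝ :=
  (gaugePotential N s α A z * (profileGauge s α A z * v) - (profileGauge s α A z * v) ^ p)
    / gaugeFactor N s α A z

lemma contDiffOn_gaugeDensity (hp : 1 ≤ p) :
    ContDiffOn ℝ 1 (Function.uncurry (gaugeDensity N s α A p)) (Ici 0 ×ˢ univ) := by
  rintro ⟨z, v⟩ ⟨hz, -⟩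
  have hz : 0 < 1 + z := by linarith [mem_Ici.1 hz]
  have hΨ : ContDiffAt ℝ 1 (fun y : ℝ × ℝ => profileGauge s α A y.1) (z, v) :=
    (contDiffAt_profileGauge hz).fst'
  have hQ : ContDiffAt ℝ 1 (fun y : ℝ × ℝ => gaugePotential N s α A y.1) (z, v) :=
    (contDiffAt_gaugePotential hz).fst'
  have hfactor : ContDiffAt ℝ 1 (fun y : ℝ × ℝ => gaugeFactor N s α A y.1) (z, v) :=
    (contDiffAt_gaugeFactor hz).fst'
  have hpow : ContDiff ℝ 1 fun t : ℝ => t ^ p :=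
    contDiff_rpow_const_of_le (by simpa using hp)
  have hΨv := hΨ.mul contDiffAt_snd
  exact (((hQ.mul hΨv).sub (hpow.contDiffAt.comp (z, v) hΨv)).div hfactor
    (gaugeFactor_pos hz).ne').contDiffWithinAt

lemma gaugeDensity_div_profileGauge (w : ℝ) (hz : 0 < 1 + z) :
    gaugeDensity N s α A p z (w / profileGauge s α A z) =
      (gaugePotential N s α A z * w - w ^ p) / gaugeFactor N s α A z := by
  rw [gaugeDensity, mul_div_cancel₀ _ (profileGauge_pos hz).ne']

lemma monotoneOn_gaugeDensity (hp : 1 ≤ p) (hz : 0 < 1 + z) {w : ℝ}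
    (hw : p * w ^ (p - 1) ≤ gaugePotential N s α A z) :
    MonotoneOn (gaugeDensity N s α A p z) (Icc 0 (w / profileGauge s α A z)) := by
  have hΨ := profileGauge_pos (s := s) (α := α) (A := A) hz
  have hmem {v : ℝ} (hv : v ∈ Icc 0 (w / profileGauge s α A z)) :
      profileGauge s α A z * v ∈ Icc 0 w :=
    ⟨mul_nonneg hΨ.le hv.1, (le_div_iff₀' hΨ).1 hv.2⟩
  intro x hx y hy hxy
  exact div_le_div_of_nonneg_right
    (monotoneOn_mul_sub_rpow hp hw (hmem hx) (hmem hy) (mul_le_mul_of_nonneg_left hxy hΨ.le))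
    (gaugeFactor_pos hz).le

lemma eulerPotential_gaugeDensity_le (hN : 0 < N) (hW : ∀ z ≥ 0, ContDiffAt ℝ 2 W z)
    (hlim : Tendsto (fun z => W z / profileGauge s α A z) atTop (𝓝 0))
    (hLW : ∀ z ≥ 0, profileOp N s (α * (1 - α)) W z ≤ gaugePotential N s α A z * W z)
    (hsup : ∀ z ≥ 0, profileOp N s (α * (1 - α)) W z ≤ W z ^ p) {η : ℝ} (hη : 0 ≤ η) :
    eulerPotential N (gaugeWeight N α A)
        (fun z => gaugeDensity N s α A p z (W z / profileGauge s α A z)) η ≤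
      ENNReal.ofReal (W η / profileGauge s α A η) := by
  rw [← eulerPotential_profileGauge hN hW hlim hLW hη]
  refine eulerPotential_mono (fun z hz => ?_) η
  have hz₁ : 0 < 1 + z := by linarith
  rw [gaugeDensity_div_profileGauge _ hz₁]
  exact div_le_div_of_nonneg_right (sub_le_sub_left (hsup z hz) _) (gaugeFactor_pos hz₁).le

lemma le_eulerPotential_gaugeDensity (hN : 0 < N) (hW : ∀ z ≥ 0, ContDiffAt ℝ 2 W z)
    (hlim : Tendsto (fun z => W z / profileGauge s α A z) atTop (𝓝 0))
    (hLW : ∀ z ≥ 0, profileOp N s (α * (1 - α)) W z ≤ gaugePotential N s α A z * W z)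
    (hsub : ∀ z ≥ 0, W z ^ p ≤ profileOp N s (α * (1 - α)) W z) {η : ℝ} (hη : 0 ≤ η) :
    ENNReal.ofReal (W η / profileGauge s α A η) ≤
      eulerPotential N (gaugeWeight N α A)
        (fun z => gaugeDensity N s α A p z (W z / profileGauge s α A z)) η := by
  rw [← eulerPotential_profileGauge hN hW hlim hLW hη]
  refine eulerPotential_mono (fun z hz => ?_) η
  have hz₁ : 0 < 1 + z := by linarith
  rw [gaugeDensity_div_profileGauge _ hz₁]
  exact div_le_div_of_nonneg_right (sub_le_sub_left (hsub z hz) _) (gaugeFactor_pos hz₁).le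

lemma profileOp_eq_rpow_of_isEulerSystemSol
    (hsol : IsEulerSystemSol N (gaugeWeight N α A) (gaugeDensity N s α A p) v P) (hz : 0 < z) :
    profileOp N s (α * (1 - α)) (fun y => profileGauge s α A y * v y) z =
      (profileGauge s α A z * v z) ^ p := by
  have hz₁ : 0 < 1 + z := by linarith
  have hv : ∀ᶠ y in 𝓝 z, HasDerivAt v (-(gaugeWeight N α A y * P y)) y := by
    filter_upwards [Ioi_mem_nhds hz] with y hy
      using (hsol.hasDerivWithinAt (le_of_lt hy)).hasDerivAt (Ici_mem_nhds hy)
  rw [profileOp_profileGauge_mul hz₁ hv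
    (hsol.contDiff.differentiable one_ne_zero z).hasDerivAt, hsol.euler hz.le, gaugeDensity,
    mul_div_cancel₀ _ (gaugeFactor_pos hz₁).ne', sub_sub_cancel]

lemma continuous_profileOp (N s μ : ℝ) (hW : ContDiff ℝ 2 W) : Continuous (profileOp N s μ W) := by
  have hW' : ContDiff ℝ 1 (deriv W) := (contDiff_succ_iff_deriv.1 hW).2.2
  have := hW'.continuous_deriv le_rfl
  have := hW.continuous
  have := hW'.continuous
  unfold profileOp
  fun_prop

lemma exists_contDiff_profileOp_eq (hp : 1 < p)
    (hsol : IsEulerSystemSol N (gaugeWeight N α A) (gaugeDensity N s α A p) v P) :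
    ∃ W : ℝ → ℝ, ContDiff ℝ 2 W ∧ (∀ z ≥ 0, W z = profileGauge s α A z * v z) ∧
      ∀ z ≥ 0, profileOp N s (α * (1 - α)) W z = W z ^ p := by
  have hΨv : ContDiffOn ℝ 2 (fun z => profileGauge s α A z * v z) (Ici 0) :=
    ContDiffOn.mul
      (fun z hz => (contDiffAt_profileGauge (by linarith [mem_Ici.1 hz])).contDiffWithinAt)
      hsol.contDiffOn
  obtain ⟨W, hW, hWeq⟩ := exists_contDiff_eqOn_Ici 2 hΨv
  refine ⟨W, hW, hWeq, ?_⟩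
  have hpos : EqOn (profileOp N s (α * (1 - α)) W) (fun z => W z ^ p) (Ioi 0) := fun z hz => by
    have hnear : W =ᶠ[𝓝 z] fun y => profileGauge s α A y * v y := by
      filter_upwards [Ioi_mem_nhds hz] with y hy using hWeq (mem_Ioi.1 hy).le
    simp only [profileOp_congr _ _ _ hnear, hnear.eq_of_nhds,
      profileOp_eq_rpow_of_isEulerSystemSol hsol hz]
  have hclosure := hpos.closure (continuous_profileOp N s (α * (1 - α)) hW)
    (hW.continuous.rpow_const fun _ => Or.inr (by linarith))
  rw [closure_Ioi] at hclosure
  exact hclosure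

theorem exists_contDiff_profileOp_eq_mem_Icc {Wm Wp : ℝ → ℝ} (hN : 0 < N) (hp : 1 < p)
    (hWm : ∀ z ≥ 0, ContDiffAt ℝ 2 Wm z) (hWp : ∀ z ≥ 0, ContDiffAt ℝ 2 Wp z)
    (hWm0 : ∀ z ≥ 0, 0 ≤ Wm z) (hle : ∀ z ≥ 0, Wm z ≤ Wp z)
    (hsub : ∀ z ≥ 0, Wm z ^ p ≤ profileOp N s (α * (1 - α)) Wm z)
    (hsubQ : ∀ z ≥ 0, profileOp N s (α * (1 - α)) Wm z ≤ gaugePotential N s α A z * Wm z)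
    (hsup : ∀ z ≥ 0, profileOp N s (α * (1 - α)) Wp z ≤ Wp z ^ p)
    (hsupQ : ∀ z ≥ 0, p * Wp z ^ (p - 1) ≤ gaugePotential N s α A z)
    (hlim : Tendsto (fun z => Wp z / profileGauge s α A z) atTop (𝓝 0)) :
    ∃ W : ℝ → ℝ, ContDiff ℝ 2 W ∧ (∀ z ≥ 0, W z ∈ Icc (Wm z) (Wp z)) ∧
      ∀ z ≥ 0, profileOp N s (α * (1 - α)) W z = W z ^ p := by
  have one_add_pos {z : ℝ} (hz : 0 ≤ z) : 0 < 1 + z := by linarith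
  have hΨ {z : ℝ} (hz : 0 ≤ z) : 0 < profileGauge s α A z := profileGauge_pos (one_add_pos hz)
  have hvm {z : ℝ} (hz : 0 ≤ z) :
      Wm z / profileGauge s α A z ∈ Icc 0 (Wp z / profileGauge s α A z) :=
    ⟨div_nonneg (hWm0 z hz) (hΨ hz).le, div_le_div_of_nonneg_right (hle z hz) (hΨ hz).le⟩
  have hlimm : Tendsto (fun z => Wm z / profileGauge s α A z) atTop (𝓝 0) :=
    tendsto_of_tendsto_of_tendsto_of_le_of_le' tendsto_const_nhds hlim
      ((eventually_ge_atTop 0).mono fun z hz => (hvm hz).1)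
      ((eventually_ge_atTop 0).mono fun z hz => (hvm hz).2)
  have hWpQ (z : ℝ) (hz : 0 ≤ z) :
      profileOp N s (α * (1 - α)) Wp z ≤ gaugePotential N s α A z * Wp z := by
    have hWp0 := (hWm0 z hz).trans (hle z hz)
    refine (hsup z hz).trans ?_
    have := monotoneOn_mul_sub_rpow hp.le (hsupQ z hz) ⟨le_rfl, hWp0⟩ ⟨hWp0, le_rfl⟩ hWp0
    simp only [mul_zero, zero_rpow (by linarith : p ≠ 0), sub_self] at this
    linarith
  obtain ⟨v, P, hsol, hv⟩ := exists_isEulerSystemSol_mem_Icc (N := N)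
    (e := gaugeWeight N α A) (F := gaugeDensity N s α A p)
    (vm := fun z => Wm z / profileGauge s α A z) (vp := fun z => Wp z / profileGauge s α A z) hN
    (fun z hz => (contDiffAt_gaugeWeight (one_add_pos hz)).contDiffWithinAt)
    (fun z hz => (gaugeWeight_pos (one_add_pos hz)).le) (contDiffOn_gaugeDensity hp.le)
    (fun z _ => by simp [gaugeDensity, zero_rpow (by linarith : p ≠ 0)])
    (fun z hz => monotoneOn_gaugeDensity hp.le (one_add_pos hz) (hsupQ z hz))
    (fun z hz => hvm hz)
    (fun η hη => eulerPotential_gaugeDensity_le hN hWp hlim hWpQ hsup hη)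
    (fun η hη => le_eulerPotential_gaugeDensity hN hWm hlimm hsubQ hsub hη)
  obtain ⟨W, hW, hWv, hWop⟩ := exists_contDiff_profileOp_eq hp hsol
  refine ⟨W, hW, fun z hz => ?_, hWop⟩
  rw [hWv z hz]
  exact ⟨(div_le_iff₀' (hΨ hz)).1 (hv z hz).1, (le_div_iff₀' (hΨ hz)).1 (hv z hz).2⟩

end Density

section Barriers

variable {N s α A p z : ℝ}

lemma profileOp_const_mul {W : ℝ → ℝ} (μ c : ℝ) (hW : ContDiffAt ℝ 2 W z) :
    profileOp N s μ (fun y => c * W y) z = c * profileOp N s μ W z := by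
  rw [profileOp_eq_of_hasDerivAt₂ _ _ _ ((hasDerivAt₂_of_contDiffAt hW).const_mul c), profileOp]
  ring

lemma profileOp_sub {V W : ℝ → ℝ} (μ : ℝ) (hV : ContDiffAt ℝ 2 V z) (hW : ContDiffAt ℝ 2 W z) :
    profileOp N s μ (fun y => V y - W y) z = profileOp N s μ V z - profileOp N s μ W z := by
  rw [profileOp_eq_of_hasDerivAt₂ _ _ _
    ((hasDerivAt₂_of_contDiffAt hV).sub (hasDerivAt₂_of_contDiffAt hW)), profileOp, profileOp]
  ring

lemma profileOp_one_add_rpow (β : ℝ) (hz : 0 < 1 + z) :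
    profileOp N s (α * (1 - α)) (fun y => (1 + y) ^ (-β)) z = (1 + z) ^ (-β) / (1 + z) *
      ((2 * β - s - α) * (2 * β - s - 1 + α) * z + (s + α) * (s + 1 - α) - 4 * N * β) := by
  rw [profileOp_eq_of_hasDerivAt₂ _ _ _ (hasDerivAt₂_add_rpow (-β) hz.ne'), rpow_sub_one hz.ne',
    rpow_sub hz, rpow_two]
  field_simp
  ring

/-- The decay of the profiles at infinity, which corresponds to solutions of the partial
differential equation of size `x₁ ^ α` at the boundary. -/
noncomputable def decayProfile (s α z : ℝ) : ℝ := (1 + z) ^ (-((s + α) / 2))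

/-- The supersolution: a multiple of `decayProfile` corrected by a term of lower order which makes
the profile operator negative near infinity. -/
noncomputable def upperBarrier (s α M z : ℝ) : ℝ :=
  2 * M * decayProfile s α z - M * decayProfile s (α + 1) z

lemma decayProfile_pos (hz : 0 < 1 + z) : 0 < decayProfile s α z := rpow_pos_of_pos hz _

lemma contDiffAt_decayProfile {n : WithTop ℕ∞} (hz : 0 < 1 + z) :
    ContDiffAt ℝ n (decayProfile s α) z := contDiffAt_one_add_rpow _ hz

lemma contDiffAt_upperBarrier {n : WithTop ℕ∞} {M : ℝ} (hz : 0 < 1 + z) :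
    ContDiffAt ℝ n (upperBarrier s α M) z :=
  (contDiffAt_const.mul (contDiffAt_decayProfile hz)).sub
    (contDiffAt_const.mul (contDiffAt_decayProfile hz))

lemma decayProfile_add_one (hz : 0 < 1 + z) :
    decayProfile s (α + 1) z = decayProfile s α z * (1 + z) ^ (-(1 / 2) : ℝ) := by
  rw [decayProfile, decayProfile, ← rpow_add hz]
  ring_nf

lemma decayProfile_rpow_sub_one (hs : s * (p - 1) = 2) (hz : 0 < 1 + z) :
    decayProfile s α z ^ (p - 1) = (1 + z) ^ (-(α * (p - 1) / 2)) / (1 + z) := by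
  rw [decayProfile, ← rpow_mul hz.le, ← rpow_sub_one hz.ne']
  congr 1
  linear_combination (-1 / 2) * hs

lemma profileOp_decayProfile (hz : 0 < 1 + z) :
    profileOp N s (α * (1 - α)) (decayProfile s α) z =
      decayProfile s α z / (1 + z) * profileGap N s α := by
  refine (profileOp_one_add_rpow _ hz).trans ?_
  rw [decayProfile, profileGap]
  ring

lemma profileOp_upperBarrier (M : ℝ) (hz : 0 < 1 + z) :
    profileOp N s (α * (1 - α)) (upperBarrier s α M) z = M * decayProfile s α z / (1 + z) *
      (2 * profileGap N s α
        - (1 + z) ^ (-(1 / 2) : ℝ) * (2 * α * z + profileGap N s α - 2 * N)) := by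
  have hcorrection : profileOp N s (α * (1 - α)) (decayProfile s (α + 1)) z =
      decayProfile s (α + 1) z / (1 + z) * (2 * α * z + profileGap N s α - 2 * N) := by
    refine (profileOp_one_add_rpow _ hz).trans ?_
    rw [decayProfile, profileGap]
    ring
  refine (profileOp_sub _ (contDiffAt_const.mul (contDiffAt_decayProfile hz))
    (contDiffAt_const.mul (contDiffAt_decayProfile hz))).trans ?_
  rw [profileOp_const_mul _ _ (contDiffAt_decayProfile hz),
    profileOp_const_mul _ _ (contDiffAt_decayProfile hz), profileOp_decayProfile hz, hcorrection,
    decayProfile_add_one hz]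
  ring

lemma upperBarrier_mem_Icc {M : ℝ} (hM : 0 ≤ M) (hz : 0 ≤ z) :
    upperBarrier s α M z ∈ Icc (M * decayProfile s α z) (2 * M * decayProfile s α z) := by
  have hz₁ : 0 < 1 + z := by linarith
  have hsmall : decayProfile s (α + 1) z ≤ decayProfile s α z :=
    rpow_le_rpow_of_exponent_le (by linarith) (by linarith)
  have := mul_le_mul_of_nonneg_left hsmall hM
  have := mul_nonneg hM (decayProfile_pos (s := s) (α := α + 1) hz₁).le
  constructor <;> rw [upperBarrier] <;> linarith

lemma exists_rpow_sub_one_ge (hp : 1 < p) (R : ℝ) : ∃ M ≥ 1, R ≤ M ^ (p - 1) :=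
  (((tendsto_rpow_atTop (sub_pos.2 hp)).eventually_ge_atTop R).and
    (eventually_ge_atTop 1)).exists.imp fun _ h => ⟨h.2, h.1⟩

lemma two_mul_sub_one_add_rpow_mul_le {κ b : ℝ} (hα : 1 / 2 ≤ α) (hN : 0 ≤ N) (hκ : 0 < κ)
    (hb : 0 ≤ b) (hz : 0 ≤ z) :
    2 * κ - (1 + z) ^ (-(1 / 2) : ℝ) * (2 * α * z + κ - 2 * N) ≤
      (2 * κ + 2 * N) * (1 + (4 * κ ^ 2 + 1 + 4 * N)) ^ b * (1 + z) ^ (-b) := by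
  have hz₁ : 0 < 1 + z := by linarith
  have hαz : z ≤ 2 * α * z := by nlinarith
  rw [rpow_neg hz₁.le, ← sqrt_eq_rpow]
  have hq : √(1 + z) ^ 2 = 1 + z := sq_sqrt hz₁.le
  have hq1 : 1 ≤ √(1 + z) := one_le_sqrt.2 (by linarith)
  rcases le_total (4 * κ ^ 2 + 1 + 4 * N) z with hlarge | hsmall
  · have hκq : 2 * κ * √(1 + z) ≤ 2 * α * z + κ - 2 * N := by
      nlinarith [sq_nonneg (√(1 + z) - 2 * κ)]
    have : 2 * κ ≤ (√(1 + z))⁻¹ * (2 * α * z + κ - 2 * N) := by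
      rwa [inv_mul_eq_div, le_div_iff₀ (by linarith)]
    have : 0 ≤ (2 * κ + 2 * N) * (1 + (4 * κ ^ 2 + 1 + 4 * N)) ^ b * (1 + z) ^ (-b) := by
      positivity
    linarith
  · have hS : (√(1 + z))⁻¹ ≤ 1 := inv_le_one_of_one_le₀ hq1
    have hS0 : 0 ≤ (√(1 + z))⁻¹ := by positivity
    calc 2 * κ - (√(1 + z))⁻¹ * (2 * α * z + κ - 2 * N)
        ≤ 2 * κ + 2 * N := by
          nlinarith [mul_nonneg hS0 (show 0 ≤ 2 * α * z + κ by linarith)]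
      _ = (2 * κ + 2 * N) * (1 + z) ^ b * (1 + z) ^ (-b) := by
          rw [mul_assoc, ← rpow_add hz₁, add_neg_cancel, rpow_zero, mul_one]
      _ ≤ _ := by gcongr

lemma rpow_eq_mul_rpow_sub_one {x : ℝ} (hx : 0 < x) : x ^ p = x * x ^ (p - 1) := by
  rw [rpow_sub_one hx.ne', mul_div_cancel₀ _ hx.ne']

lemma mul_decayProfile_rpow {M : ℝ} (hs : s * (p - 1) = 2) (hM : 0 < M) (hz : 0 < 1 + z) :
    (M * decayProfile s α z) ^ p =
      M * decayProfile s α z / (1 + z) * (M ^ (p - 1) * (1 + z) ^ (-(α * (p - 1) / 2))) := by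
  have hK := decayProfile_pos (s := s) (α := α) hz
  rw [rpow_eq_mul_rpow_sub_one (mul_pos hM hK), mul_rpow hM.le hK.le,
    decayProfile_rpow_sub_one hs hz]
  ring

lemma exists_profileOp_upperBarrier_le (hα : 1 / 2 ≤ α) (hN : 0 ≤ N) (hp : 1 < p)
    (hs : s * (p - 1) = 2) (hκ : 0 < profileGap N s α) :
    ∃ M ≥ 1, ∀ z ≥ 0,
      profileOp N s (α * (1 - α)) (upperBarrier s α M) z ≤ upperBarrier s α M z ^ p := by
  have hb : 0 ≤ α * (p - 1) / 2 := by nlinarith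
  obtain ⟨M, hM1, hM⟩ := exists_rpow_sub_one_ge hp ((2 * profileGap N s α + 2 * N)
    * (1 + (4 * profileGap N s α ^ 2 + 1 + 4 * N)) ^ (α * (p - 1) / 2))
  refine ⟨M, hM1, fun z hz => ?_⟩
  have hz₁ : 0 < 1 + z := by linarith
  have hM0 : 0 < M := by linarith
  have hK := decayProfile_pos (s := s) (α := α) hz₁
  calc profileOp N s (α * (1 - α)) (upperBarrier s α M) z
      = M * decayProfile s α z / (1 + z) * (2 * profileGap N s α - (1 + z) ^ (-(1 / 2) : ℝ)
          * (2 * α * z + profileGap N s α - 2 * N)) := profileOp_upperBarrier M hz₁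
    _ ≤ M * decayProfile s α z / (1 + z)
          * (M ^ (p - 1) * (1 + z) ^ (-(α * (p - 1) / 2))) := by
        refine mul_le_mul_of_nonneg_left ?_ (by positivity)
        exact (two_mul_sub_one_add_rpow_mul_le hα hN hκ hb hz).trans (by gcongr)
    _ = (M * decayProfile s α z) ^ p := (mul_decayProfile_rpow hs hM0 hz₁).symm
    _ ≤ upperBarrier s α M z ^ p := by
        have := (upperBarrier_mem_Icc (s := s) (α := α) hM0.le hz).1
        gcongr

lemma profileOp_const_mul_decayProfile (ε : ℝ) (hz : 0 < 1 + z) :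
    profileOp N s (α * (1 - α)) (fun y => ε * decayProfile s α y) z =
      ε * decayProfile s α z / (1 + z) * profileGap N s α := by
  rw [profileOp_const_mul _ _ (contDiffAt_decayProfile hz), profileOp_decayProfile hz]
  ring

lemma exists_rpow_le_profileOp_decayProfile (hα : 0 ≤ α) (hp : 1 < p) (hs : s * (p - 1) = 2)
    (hκ : 0 < profileGap N s α) :
    ∃ ε > 0, ε ≤ 1 ∧ ∀ z ≥ 0, (ε * decayProfile s α z) ^ p ≤
      profileOp N s (α * (1 - α)) (fun y => ε * decayProfile s α y) z := by
  obtain ⟨M, hM1, hM⟩ := exists_rpow_sub_one_ge hp (profileGap N s α)⁻¹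
  have hM0 : 0 < M := by linarith
  have hε : M⁻¹ ^ (p - 1) ≤ profileGap N s α := by
    rw [inv_rpow hM0.le]
    exact inv_le_of_inv_le₀ hκ hM
  refine ⟨M⁻¹, inv_pos.2 hM0, inv_le_one_of_one_le₀ hM1, fun z hz => ?_⟩
  have hz₁ : 0 < 1 + z := by linarith
  have hK := decayProfile_pos (s := s) (α := α) hz₁
  rw [mul_decayProfile_rpow hs (inv_pos.2 hM0) hz₁, profileOp_const_mul_decayProfile _ hz₁]
  refine mul_le_mul_of_nonneg_left ?_ (by positivity)
  have hdecay : (1 + z) ^ (-(α * (p - 1) / 2)) ≤ 1 :=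
    rpow_le_one_of_one_le_of_nonpos (by linarith) (by nlinarith)
  exact (mul_le_of_le_one_right (by positivity) hdecay).trans hε

end Barriers

section ProfileExistence

variable {N s α A p z : ℝ}

lemma tendsto_one_add_rpow_neg {b : ℝ} (hb : 0 < b) :
    Tendsto (fun z : ℝ => (1 + z) ^ (-b)) atTop (𝓝 0) :=
  (tendsto_rpow_neg_atTop hb).comp (tendsto_atTop_add_const_left atTop 1 tendsto_id)

lemma profileGap_div_le_gaugePotential (hα : 1 / 2 ≤ α) (hN : 0 ≤ N) (hA : 0 ≤ A) (hz : 0 ≤ z) :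
    profileGap N s α / (1 + z) ≤ gaugePotential N s α A z := by
  have hm : 0 ≤ 2 * α - 1 := by linarith
  refine div_le_div_of_nonneg_right ?_ (by linarith)
  have : 0 ≤ z * (A * (2 * α - 1) * (1 + z) ^ (1 / 2 - α)) ^ 2
    + 2 * N * (A * (2 * α - 1) * (1 + z) ^ (1 / 2 - α)) + 2 * N * (2 * α - 1) := by positivity
  linarith

lemma exists_gaugePotential_ge {b C : ℝ} (hα : 1 / 2 < α) (hN : 0 < N) (hb : 0 < b) (hC : 0 ≤ C)
    (hκ : 0 < profileGap N s α) :
    ∃ A ≥ 0, ∀ z ≥ 0, C * ((1 + z) ^ (-b) / (1 + z)) ≤ gaugePotential N s α A z := by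
  have hlim : Tendsto (fun z : ℝ => C * (1 + z) ^ (-b)) atTop (𝓝 0) := by
    simpa using (tendsto_one_add_rpow_neg hb).const_mul C
  obtain ⟨Z, hZ⟩ := ((hlim.eventually (ge_mem_nhds hκ)).and
    (eventually_ge_atTop 0)).exists_forall_of_atTop
  have hZ0 : 0 ≤ Z := (hZ Z le_rfl).2
  have hm : 0 < 2 * α - 1 := by linarith
  have : 0 < (1 + Z) ^ (1 / 2 - α) := by positivity
  refine ⟨C / (2 * N * (2 * α - 1) * (1 + Z) ^ (1 / 2 - α)), by positivity, fun z hz => ?_⟩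
  set A := C / (2 * N * (2 * α - 1) * (1 + Z) ^ (1 / 2 - α)) with hA
  have hA0 : 0 ≤ A := by positivity
  rw [← mul_div_assoc]
  rcases le_total Z z with hlarge | hsmall
  · exact (div_le_div_of_nonneg_right (hZ z hlarge).1 (by linarith)).trans
      (profileGap_div_le_gaugePotential hα.le hN.le hA0 hz)
  refine div_le_div_of_nonneg_right ?_ (by linarith)
  have hbound : C * (1 + z) ^ (-b) ≤ 2 * N * (A * (2 * α - 1) * (1 + z) ^ (1 / 2 - α)) :=
    calc C * (1 + z) ^ (-b) ≤ C := mul_le_of_le_one_right hC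
          (rpow_le_one_of_one_le_of_nonpos (by linarith) (by linarith))
      _ = 2 * N * (A * (2 * α - 1) * (1 + Z) ^ (1 / 2 - α)) := by rw [hA]; field_simp
      _ ≤ 2 * N * (A * (2 * α - 1) * (1 + z) ^ (1 / 2 - α)) := by
        have := rpow_le_rpow_of_nonpos (show 0 < 1 + z by linarith)
          (show 1 + z ≤ 1 + Z by linarith) (show 1 / 2 - α ≤ 0 by linarith)
        gcongr
  have : 0 ≤ z * (A * (2 * α - 1) * (1 + z) ^ (1 / 2 - α)) ^ 2 := by positivity
  have : 0 ≤ 2 * N * (2 * α - 1) := by positivity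
  linarith

lemma decayProfile_div_profileGauge (hz : 0 < 1 + z) :
    decayProfile s α z / profileGauge s α A z =
      (1 + z) ^ (1 / 2 - α) * exp (A * (1 + z) ^ (1 / 2 - α)) := by
  rw [decayProfile, profileGauge, exp_neg, ← div_eq_mul_inv, div_div_eq_mul_div,
    mul_div_right_comm, ← rpow_sub hz]
  ring_nf

lemma tendsto_decayProfile_div_profileGauge (s A : ℝ) (hα : 1 / 2 < α) :
    Tendsto (fun z => decayProfile s α z / profileGauge s α A z) atTop (𝓝 0) := by
  have hY : Tendsto (fun z : ℝ => (1 + z) ^ (1 / 2 - α)) atTop (𝓝 0) := by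
    simpa only [neg_sub] using tendsto_one_add_rpow_neg (sub_pos.2 hα)
  have hlim : Tendsto (fun z : ℝ => (1 + z) ^ (1 / 2 - α) * exp (A * (1 + z) ^ (1 / 2 - α)))
      atTop (𝓝 0) := by
    simpa using hY.mul ((continuous_exp.tendsto _).comp (hY.const_mul A))
  refine hlim.congr' ?_
  filter_upwards [eventually_ge_atTop 0] with z hz
    using (decayProfile_div_profileGauge (by linarith)).symm

lemma tendsto_upperBarrier_div_profileGauge {M : ℝ} (s A : ℝ) (hα : 1 / 2 < α) (hM : 0 ≤ M) :
    Tendsto (fun z => upperBarrier s α M z / profileGauge s α A z) atTop (𝓝 0) := by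
  have hupper := (tendsto_decayProfile_div_profileGauge s A hα).const_mul (2 * M)
  rw [mul_zero] at hupper
  refine tendsto_of_tendsto_of_tendsto_of_le_of_le' tendsto_const_nhds hupper ?_ ?_
  all_goals
    filter_upwards [eventually_ge_atTop 0] with z hz
    have hz₁ : 0 < 1 + z := by linarith
    have hΨ := profileGauge_pos (s := s) (α := α) (A := A) hz₁
    have hbarrier := upperBarrier_mem_Icc (s := s) (α := α) hM hz
  · exact div_nonneg ((mul_nonneg hM (decayProfile_pos hz₁).le).trans hbarrier.1) hΨ.le
  · rw [← mul_div_assoc]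
    exact div_le_div_of_nonneg_right hbarrier.2 hΨ.le

lemma exists_forall_upperBarrier_rpow_le {M : ℝ} (hα : 1 / 2 < α) (hN : 0 < N) (hp : 1 < p)
    (hs : s * (p - 1) = 2) (hκ : 0 < profileGap N s α) (hM : 0 ≤ M) :
    ∃ A ≥ 0, ∀ z ≥ 0, p * upperBarrier s α M z ^ (p - 1) ≤ gaugePotential N s α A z := by
  have : 0 < p - 1 := by linarith
  obtain ⟨A, hA, hQ⟩ := exists_gaugePotential_ge (b := α * (p - 1) / 2)
    (C := p * (2 * M) ^ (p - 1)) hα hN (by positivity) (by positivity) hκ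
  refine ⟨A, hA, fun z hz => le_trans ?_ (hQ z hz)⟩
  have hz₁ : 0 < 1 + z := by linarith
  have hK := decayProfile_pos (s := s) (α := α) hz₁
  have hbarrier := upperBarrier_mem_Icc (s := s) (α := α) hM hz
  rw [← decayProfile_rpow_sub_one hs hz₁, mul_assoc, ← mul_rpow (by positivity) hK.le]
  have : 0 ≤ upperBarrier s α M z := (mul_nonneg hM hK.le).trans hbarrier.1
  gcongr
  exact hbarrier.2

theorem exists_contDiff_profileOp_eq_rpow (hN : 0 < N) (hα : 1 / 2 < α) (hp : 1 < p)
    (hs : s * (p - 1) = 2) (hκ : 0 < profileGap N s α) :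
    ∃ W : ℝ → ℝ, ContDiff ℝ 2 W ∧ (∀ z ≥ 0, profileOp N s (α * (1 - α)) W z = W z ^ p) ∧
      ∃ c > 0, ∀ z ≥ 0,
        W z ∈ Icc (c⁻¹ * decayProfile s α z) (c * decayProfile s α z) := by
  obtain ⟨M, hM, hsup⟩ := exists_profileOp_upperBarrier_le hα.le hN.le hp hs hκ
  obtain ⟨ε, hε, hε1, hsub⟩ := exists_rpow_le_profileOp_decayProfile (by linarith) hp hs hκ
  obtain ⟨A, hA, hQ⟩ := exists_forall_upperBarrier_rpow_le (M := M) hα hN hp hs hκ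
    (by linarith)
  have one_add_pos {z : ℝ} (hz : 0 ≤ z) : 0 < 1 + z := by linarith
  have hK {z : ℝ} (hz : 0 ≤ z) := decayProfile_pos (s := s) (α := α) (one_add_pos hz)
  have hKM {z : ℝ} (hz : 0 ≤ z) := upperBarrier_mem_Icc (s := s) (α := α) (M := M) (by linarith) hz
  have hsubQ (z : ℝ) (hz : 0 ≤ z) :
      profileOp N s (α * (1 - α)) (fun y => ε * decayProfile s α y) z ≤
        gaugePotential N s α A z * (ε * decayProfile s α z) := by
    rw [profileOp_const_mul_decayProfile _ (one_add_pos hz), mul_comm, ← mul_div_assoc,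
      mul_div_right_comm]
    exact mul_le_mul_of_nonneg_right (profileGap_div_le_gaugePotential hα.le hN.le hA hz)
      (mul_pos hε (hK hz)).le
  obtain ⟨W, hW, hmem, hop⟩ := exists_contDiff_profileOp_eq_mem_Icc (A := A)
    (Wm := fun z => ε * decayProfile s α z) hN hp
    (fun z hz => contDiffAt_const.mul (contDiffAt_decayProfile (one_add_pos hz)))
    (fun z hz => contDiffAt_upperBarrier (one_add_pos hz))
    (fun z hz => (mul_pos hε (hK hz)).le)
    (fun z hz => le_trans (by gcongr; exacts [(hK hz).le, hε1.trans hM]) (hKM hz).1) hsub hsubQ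
    hsup hQ (tendsto_upperBarrier_div_profileGauge s A hα (by linarith))
  refine ⟨W, hW, hop, max (2 * M) ε⁻¹, by positivity, fun z hz => ⟨?_, ?_⟩⟩
  · refine le_trans (mul_le_mul_of_nonneg_right ?_ (hK hz).le) (hmem z hz).1
    exact inv_le_of_inv_le₀ hε (le_max_right _ _)
  · exact ((hmem z hz).2.trans (hKM hz).2).trans
      (mul_le_mul_of_nonneg_right (le_max_left _ _) (hK hz).le)

end ProfileExistence

section Exponent

variable {μ : ℝ}

lemma half_lt_aPlus (hμ : μ < 1 / 4) : 1 / 2 < aPlus μ :=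
  lt_add_of_pos_right _ (sqrt_pos.2 (by linarith))

lemma aPlus_mul_one_sub (hμ : μ ≤ 1 / 4) : aPlus μ * (1 - aPlus μ) = μ := by
  have hsq : √(1 / 4 - μ) ^ 2 = 1 / 4 - μ := sq_sqrt (by linarith)
  rw [aPlus]
  linear_combination -hsq

end Exponent

section SepFun

variable {n : ℕ} {x : EuclideanSpace ℝ (Fin n)} {W : ℝ → ℝ} {s μ p : ℝ}

lemma x1_smul (l : ℝ) (x : EuclideanSpace ℝ (Fin n)) : x1 (l • x) = l * x1 x := by
  unfold x1
  split_ifs <;> simp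

lemma tanSq_smul {l : ℝ} (hl : l ≠ 0) (x : EuclideanSpace ℝ (Fin n)) :
    tanSq (l • x) = tanSq x := by
  rw [tanSq, tanSq, x1_smul, norm_smul, mul_pow, mul_pow, norm_eq_abs, sq_abs,
    mul_div_mul_left _ _ (pow_ne_zero 2 hl)]

lemma sepFun_smul {l : ℝ} (hl : 0 < l) (hx : x ∈ halfSpace n) (s : ℝ) (W : ℝ → ℝ) :
    sepFun s W (l • x) = l ^ (-s) * sepFun s W x := by
  rw [sepFun, sepFun, tanSq_smul hl.ne', x1_smul, mul_rpow hl.le (le_of_lt hx), mul_assoc]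

lemma sepFun_decayProfile (hx : x ∈ halfSpace n) (s α : ℝ) :
    sepFun s (decayProfile s α) x = x1 x ^ α * ‖x‖ ^ (-α - s) := by
  have hx0 : 0 < x1 x := hx
  have hz : 0 ≤ 1 + tanSq x := by linarith [tanSq_nonneg hx]
  have hnorm : ‖x‖ = x1 x * (1 + tanSq x) ^ (1 / 2 : ℝ) := by
    rw [← sqrt_eq_rpow, ← sqrt_sq (norm_nonneg x), norm_sq_eq_x1_sq_mul hx,
      sqrt_mul (sq_nonneg _), sqrt_sq hx0.le]
  rw [sepFun, decayProfile, hnorm, mul_rpow hx0.le (rpow_nonneg hz _), ← rpow_mul hz,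
    ← mul_assoc, ← rpow_add hx0]
  ring_nf

lemma lap_sepFun_add_eq_rpow_iff (hs : s * (p - 1) = 2) (hx : x ∈ halfSpace n)
    (hW : ContDiffAt ℝ 2 W (tanSq x)) (hW0 : 0 ≤ W (tanSq x)) :
    lap (sepFun s W) x + μ / x1 x ^ 2 * sepFun s W x = sepFun s W x ^ p ↔
      profileOp ((n - 1) / 2) s μ W (tanSq x) = W (tanSq x) ^ p := by
  have hx0 : 0 < x1 x := hx
  have hpow : sepFun s W x ^ p = x1 x ^ (-s - 2) * W (tanSq x) ^ p := by
    rw [sepFun, mul_rpow (rpow_nonneg hx0.le _) hW0, ← rpow_mul hx0.le]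
    congr 2
    linear_combination -hs
  rw [lap_sepFun_add hx s μ hW, hpow, mul_right_inj' (rpow_pos_of_pos hx0 _).ne']

theorem isSepSolPlus_sepFun (hp : p ≠ 1) (hW : ContDiff ℝ 2 W)
    (hop : ∀ z ≥ 0, profileOp ((n - 1) / 2) (2 / (p - 1)) μ W z = W z ^ p)
    (hbound : ∃ c > 0, ∀ z ≥ 0, W z ∈
      Icc (c⁻¹ * decayProfile (2 / (p - 1)) (aPlus μ) z)
        (c * decayProfile (2 / (p - 1)) (aPlus μ) z)) :
    IsSepSolPlus n μ p (sepFun (2 / (p - 1)) W) := by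
  obtain ⟨c, hc, hWc⟩ := hbound
  have hpos (z : ℝ) (hz : 0 ≤ z) : 0 < W z :=
    (mul_pos (inv_pos.2 hc) (decayProfile_pos (by linarith))).trans_le (hWc z hz).1
  refine ⟨fun x hx => (contDiffAt_sepFun hx _ hW.contDiffAt).contDiffWithinAt,
    fun x hx => mul_pos (rpow_pos_of_pos hx _) (hpos _ (tanSq_nonneg hx)),
    fun x hx => ?_, fun x _ y _ h₁ h₂ => ?_, fun l hl x hx => sepFun_smul hl hx _ _,
    c, hc, fun x hx => ?_⟩
  · exact (lap_sepFun_add_eq_rpow_iff (div_mul_cancel₀ 2 (sub_ne_zero.2 hp)) hx hW.contDiffAt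
      (hpos _ (tanSq_nonneg hx)).le).2 (hop _ (tanSq_nonneg hx))
  · rw [sepFun, sepFun, tanSq, tanSq, h₁, h₂]
  · have hx0 : 0 < x1 x ^ (-(2 / (p - 1))) := rpow_pos_of_pos hx _
    obtain ⟨hlower, hupper⟩ := hWc _ (tanSq_nonneg hx)
    rw [mul_assoc, mul_assoc, ← sepFun_decayProfile hx, sepFun, sepFun, mul_left_comm c⁻¹,
      mul_left_comm c]
    exact ⟨mul_le_mul_of_nonneg_left hlower hx0.le, mul_le_mul_of_nonneg_left hupper hx0.le⟩

theorem exists_isSepSolPlus (hn : 2 ≤ n) (hμ : μ < 1 / 4) (hp : 1 < p)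
    (hpc : p < 1 + 2 / ((n : ℝ) - 2 + aPlus μ)) :
    ∃ u : EuclideanSpace ℝ (Fin n) → ℝ, IsSepSolPlus n μ p u := by
  have hn' : (2 : ℝ) ≤ n := by exact_mod_cast hn
  have hα := half_lt_aPlus hμ
  have hs : (n : ℝ) - 2 + aPlus μ < 2 / (p - 1) := by
    rw [lt_div_comm₀ (by linarith) (by linarith)]
    linarith
  have hgap : 0 < profileGap (((n : ℝ) - 1) / 2) (2 / (p - 1)) (aPlus μ) :=
    mul_pos (by linarith) (by linarith)
  obtain ⟨W, hW, hop, hbound⟩ := exists_contDiff_profileOp_eq_rpow (by linarith) hα hp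
    (div_mul_cancel₀ 2 (by linarith)) hgap
  rw [aPlus_mul_one_sub hμ.le] at hop
  exact ⟨_, isSepSolPlus_sepFun hp.ne' hW hop hbound⟩

end SepFun

section Slice

variable {n : ℕ}

/-- The points of height one in the plane of the first two axes; every point of the half-space is
carried to one of them by a dilation and an axial symmetry. -/
noncomputable def slicePoint (hn : 2 ≤ n) (h : ℝ) : EuclideanSpace ℝ (Fin n) :=
  EuclideanSpace.single ⟨0, by omega⟩ 1 + h • EuclideanSpace.single ⟨1, by omega⟩ 1

lemma x1_slicePoint (hn : 2 ≤ n) (h : ℝ) : x1 (slicePoint hn h) = 1 := by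
  simp [x1_eq_apply (by omega : 0 < n), slicePoint]

lemma slicePoint_mem_halfSpace (hn : 2 ≤ n) (h : ℝ) : slicePoint hn h ∈ halfSpace n := by
  simp [halfSpace, x1_slicePoint]

lemma norm_slicePoint_sq (hn : 2 ≤ n) (h : ℝ) : ‖slicePoint hn h‖ ^ 2 = 1 + h ^ 2 := by
  simp [slicePoint, norm_add_smul_single_sq]

lemma tanSq_slicePoint (hn : 2 ≤ n) (h : ℝ) : tanSq (slicePoint hn h) = h ^ 2 := by
  rw [tanSq, norm_slicePoint_sq, x1_slicePoint]
  ring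

lemma contDiff_slicePoint (hn : 2 ≤ n) {m : WithTop ℕ∞} : ContDiff ℝ m (slicePoint hn) := by
  unfold slicePoint
  fun_prop

end Slice

lemma deriv_zero_of_even {F : Type*} [NormedAddCommGroup F] [NormedSpace ℝ F] {f : ℝ → F}
    (hf : f.Even) : deriv f 0 = 0 := by
  have : IsAddTorsionFree F := .of_isTorsionFree ℝ F
  have hderiv := deriv_comp_neg f 0
  rwa [funext hf, neg_zero, self_eq_neg] at hderiv

lemma tendsto_sqrt_mul_deriv_comp_sqrt {U : ℝ → ℝ} (hU : ContDiff ℝ 1 U) (h0 : deriv U 0 = 0) :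
    Tendsto (fun z => √z * deriv (fun y => U √y) z) (𝓝[>] 0) (𝓝 0) := by
  have hcont : Continuous fun z => deriv U √z / 2 :=
    ((hU.continuous_deriv le_rfl).comp continuous_sqrt).div_const 2
  have hlim := (hcont.tendsto 0).mono_left (nhdsWithin_le_nhds (s := Ioi 0))
  simp only [sqrt_zero, h0, zero_div] at hlim
  refine hlim.congr' ?_
  filter_upwards [self_mem_nhdsWithin] with z hz
  have hsqrt : 0 < √z := sqrt_pos.2 hz
  have hderiv : HasDerivAt (fun y => U √y) (deriv U √z * (1 / (2 * √z))) z :=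
    (hU.differentiable one_ne_zero _).hasDerivAt.comp z (hasDerivAt_sqrt (ne_of_gt hz))
  rw [hderiv.deriv]
  field_simp

namespace IsSepSolPlus

variable {n : ℕ} {μ p : ℝ} {u v : EuclideanSpace ℝ (Fin n) → ℝ}

lemma eqOn_sepFun (hn : 2 ≤ n) (hu : IsSepSolPlus n μ p u) :
    EqOn u (sepFun (2 / (p - 1)) fun z => u (slicePoint hn √z)) (halfSpace n) := by
  intro x hx
  obtain ⟨-, -, -, hsymm, hhom, -⟩ := hu
  have hx0 : 0 < x1 x := hx
  have hmem := slicePoint_mem_halfSpace hn √(tanSq x)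
  have hx1 : x1 (x1 x • slicePoint hn √(tanSq x)) = x1 x := by
    rw [x1_smul, x1_slicePoint, mul_one]
  rw [sepFun, ← hhom _ hx0 _ hmem]
  refine hsymm x hx _ (hx0.trans_eq hx1.symm) hx1.symm ?_
  rw [← sq_eq_sq₀ (norm_nonneg _) (norm_nonneg _), norm_smul, mul_pow, norm_slicePoint_sq,
    norm_eq_abs, sq_abs, sq_sqrt (tanSq_nonneg hx), norm_sq_eq_x1_sq_mul hx]

lemma contDiff_comp_slicePoint (hn : 2 ≤ n) (hu : IsSepSolPlus n μ p u) :
    ContDiff ℝ 2 fun h => u (slicePoint hn h) :=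
  contDiff_iff_contDiffAt.2 fun h =>
    (hu.1.contDiffAt ((isOpen_halfSpace n).mem_nhds (slicePoint_mem_halfSpace hn h))).comp h
      (contDiff_slicePoint hn).contDiffAt

lemma even_comp_slicePoint (hn : 2 ≤ n) (hu : IsSepSolPlus n μ p u) :
    Function.Even fun h => u (slicePoint hn h) := by
  intro h
  refine hu.2.2.2.1 _ (slicePoint_mem_halfSpace hn _) _ (slicePoint_mem_halfSpace hn _) ?_ ?_
  · rw [x1_slicePoint, x1_slicePoint]
  · rw [← sq_eq_sq₀ (norm_nonneg _) (norm_nonneg _), norm_slicePoint_sq, norm_slicePoint_sq,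
      neg_sq]

lemma profileOp_comp_slicePoint_sqrt (hn : 2 ≤ n) (hp : p ≠ 1) (hu : IsSepSolPlus n μ p u)
    {z : ℝ} (hz : 0 < z) :
    profileOp ((n - 1) / 2) (2 / (p - 1)) μ (fun y => u (slicePoint hn √y)) z
      = u (slicePoint hn √z) ^ p := by
  have hx := slicePoint_mem_halfSpace hn √z
  have hz' : tanSq (slicePoint hn √z) = z := by rw [tanSq_slicePoint, sq_sqrt hz.le]
  have hW : ContDiffAt ℝ 2 (fun y => u (slicePoint hn √y)) z :=
    (hu.contDiff_comp_slicePoint hn).contDiffAt.comp z (contDiffAt_sqrt hz.ne')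
  have hpde := hu.2.2.1 _ hx
  have hlap : lap u (slicePoint hn √z) =
      lap (sepFun (2 / (p - 1)) fun y => u (slicePoint hn √y)) (slicePoint hn √z) := by
    have := (hu.eqOn_sepFun hn).eventuallyEq_of_mem ((isOpen_halfSpace n).mem_nhds hx)
    rw [lap, lap, (this.iteratedFDeriv ℝ 2).self_of_nhds]
  rw [hlap, hu.eqOn_sepFun hn hx, lap_sepFun_add_eq_rpow_iff
    (div_mul_cancel₀ 2 (sub_ne_zero.2 hp)) hx (by rwa [hz'])
    (hu.2.1 _ (slicePoint_mem_halfSpace hn _)).le, hz'] at hpde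
  exact hpde

theorem isProfile (hn : 2 ≤ n) (hp : p ≠ 1) (hu : IsSepSolPlus n μ p u) :
    IsProfile ((n - 1) / 2) (2 / (p - 1)) μ p ((2 / (p - 1) + aPlus μ) / 2)
      fun z => u (slicePoint hn √z) where
  contDiffAt hz :=
    (hu.contDiff_comp_slicePoint hn).contDiffAt.comp _ (contDiffAt_sqrt hz.ne')
  pos _ := hu.2.1 _ (slicePoint_mem_halfSpace hn _)
  profileOp_eq := hu.profileOp_comp_slicePoint_sqrt hn hp
  exists_bound := by
    obtain ⟨c, hc, hbound⟩ := hu.2.2.2.2.2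
    refine ⟨c, hc, fun z hz => ?_⟩
    have hx := slicePoint_mem_halfSpace hn √z
    have := hbound _ hx
    rwa [mul_assoc, mul_assoc, ← sepFun_decayProfile hx, sepFun, x1_slicePoint, one_rpow, one_mul,
      tanSq_slicePoint, sq_sqrt hz.le, decayProfile] at this
  tendsto_sqrt_mul_deriv :=
    tendsto_sqrt_mul_deriv_comp_sqrt ((hu.contDiff_comp_slicePoint hn).of_le one_le_two)
      (deriv_zero_of_even (hu.even_comp_slicePoint hn))

theorem eqOn (hn : 2 ≤ n) (hμ : μ < 1 / 4) (hp : 1 < p) (hu : IsSepSolPlus n μ p u)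
    (hv : IsSepSolPlus n μ p v) : EqOn u v (halfSpace n) := by
  have hn' : (2 : ℝ) ≤ n := by exact_mod_cast hn
  have hprofile : EqOn (fun z => u (slicePoint hn √z)) (fun z => v (slicePoint hn √z)) (Ioi 0) :=
    fun z hz => (hu.isProfile hn hp.ne').eq (by linarith) hp (by linarith [half_lt_aPlus hμ])
      (hv.isProfile hn hp.ne') hz
  have hclosure := hprofile.closure
    ((hu.contDiff_comp_slicePoint hn).continuous.comp continuous_sqrt)
    ((hv.contDiff_comp_slicePoint hn).continuous.comp continuous_sqrt)
  rw [closure_Ioi] at hclosure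
  intro x hx
  rw [hu.eqOn_sepFun hn hx, hv.eqOn_sepFun hn hx, sepFun, sepFun]
  congr 1
  exact hclosure (tanSq_nonneg hx)

end IsSepSolPlus

/-- for `1 < p < p_c` there is a unique separable solution with the
strong singularity at the origin behaving like the small `L_μ`-harmonic. -/
theorem stmt1 (n : ℕ) (hn : 2 ≤ n) (μ p : ℝ) (hμ : μ < 1 / 4) (hp1 : 1 < p)
    (hpc : p < 1 + 2 / ((n : ℝ) - 2 + aPlus μ)) :
    (∃ u : EuclideanSpace ℝ (Fin n) → ℝ, IsSepSolPlus n μ p u) ∧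
    (∀ u₁ u₂ : EuclideanSpace ℝ (Fin n) → ℝ,
      IsSepSolPlus n μ p u₁ → IsSepSolPlus n μ p u₂ → Set.EqOn u₁ u₂ (halfSpace n)) := by
  exact ⟨exists_isSepSolPlus hn hμ hp1 hpc, fun _ _ h₁ h₂ => h₁.eqOn hn hμ hp1 h₂⟩
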